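/- Let X be a compact subset of ℝ, c : X × X → (−∞,+∞] lower semi-continuous and bounded from below, and let F₁, F₂ be admissible entropy functions with (F₁)'_∞ > 0 and F₂ superlinear. Let μ₁, μ₂ ∈ ℳ(X) be such that the martingale optimal entropy transport problem is feasible, i.e. there exists γ ∈ ℳ_M(X²) with Σ_{i=1}^2 ℱ_i(γ_i|μ_i) + ∫_{X×X} c dγ < ∞. Then ℰ_M(μ₁,μ₂) = sup_{(φ₁,φ₂)∈Λ_M} Σ_{i=1}^2 ∫_X F_i°(φ_i) dμ_i. -/

import Mathlib

open MeasureTheory Filter Set Topology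
open scoped ENNReal NNReal BoundedContinuousFunction

noncomputable section

/-- The "positive part" of an extended real number, as an element of `ℝ≥0∞`. -/
def posE (a : EReal) : ℝ≥0∞ := if a = ⊤ then ⊤ else ENNReal.ofReal a.toReal

/-- Integral of an `EReal`-valued function: positive part minus negative part
(in `EReal`, so that it is always defined). -/
def eIntegral {α : Type*} [MeasurableSpace α] (μ : Measure α) (f : α → EReal) : EReal :=
  ((∫⁻ x, posE (f x) ∂μ : ℝ≥0∞) : EReal) - ((∫⁻ x, posE (-(f x)) ∂μ : ℝ≥0∞) : EReal)

/-- The recession constant `lim_{s→∞} G(s)/s` (as a `limsup`, which coincides with the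
limit for convex functions). -/
def recessionOf (G : ℝ → ℝ≥0∞) : ℝ≥0∞ :=
  Filter.limsup (fun s : ℝ => G s / ENNReal.ofReal s) Filter.atTop

/-- An admissible entropy function: a convex, lower semicontinuous function
`F : [0,∞) → [0,∞]` which is finite at some positive point. -/
structure EntropyFn where
  F : ℝ → ℝ≥0∞
  convex' : ∀ a ∈ Ici (0:ℝ), ∀ b ∈ Ici (0:ℝ), ∀ t : ℝ, 0 ≤ t → t ≤ 1 →
    F (t * a + (1 - t) * b) ≤ ENNReal.ofReal t * F a + ENNReal.ofReal (1 - t) * F b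
  lsc : LowerSemicontinuousOn F (Ici (0:ℝ))
  dom : ∃ s : ℝ, 0 < s ∧ F s ≠ ∞

namespace EntropyFn

/-- The recession constant `F'_∞ = lim_{s→∞} F(s)/s`. -/
def recC (F : EntropyFn) : ℝ≥0∞ := recessionOf F.F

/-- `F` is superlinear if `F'_∞ = ∞`. -/
def Superlinear (F : EntropyFn) : Prop := F.recC = ∞

/-- `F°(φ) := inf_{s ≥ 0} (φ·s + F(s))`, extended to `EReal` arguments. -/
def circ (F : EntropyFn) (φ : EReal) : EReal :=
  ⨅ s : Ici (0:ℝ), φ * ((s : ℝ) : EReal) + ((F.F (s : ℝ) : ℝ≥0∞) : EReal)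

/-- The (interior of the) domain of `F°` is taken inside the set where `F°` is not `-∞`. -/
def circDom (F : EntropyFn) : Set ℝ := {φ : ℝ | F.circ (φ : EReal) ≠ ⊥}

/-- The reverse entropy function `R(r) = r·F(1/r)` for `r > 0`, with `R(0) = F'_∞`. -/
def revF (F : EntropyFn) (r : ℝ) : ℝ≥0∞ :=
  if 0 < r then ENNReal.ofReal r * F.F (1 / r) else F.recC

/-- The Legendre conjugate `R*(ψ) = sup_{s ≥ 0} (s·ψ − R(s))` of the reverse function. -/
def revConj (F : EntropyFn) (ψ : ℝ) : EReal :=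
  ⨆ s : Ici (0:ℝ), (((s : ℝ) * ψ : ℝ) : EReal) - ((F.revF (s : ℝ) : ℝ≥0∞) : EReal)

end EntropyFn

/-- The entropy functional `ℱ(γ|μ) = ∫ F(dγ/dμ) dμ + F'_∞ · γ^⊥(X)`, where
`γ = (dγ/dμ)·μ + γ^⊥` is the Lebesgue decomposition of `γ` with respect to `μ`. -/
def entF {X : Type*} [MeasurableSpace X] (F : EntropyFn) (γ μ : Measure X) : ℝ≥0∞ :=
  (∫⁻ x, F.F ((γ.rnDeriv μ x).toReal) ∂μ) + F.recC * (γ.singularPart μ) Set.univ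

/-- The reverse entropy functional `ℛ(μ|γ) = ∫ R(dμ/dγ) dγ + R'_∞ · μ^⊥(X)`. -/
def revEntF {X : Type*} [MeasurableSpace X] (F : EntropyFn) (μ γ : Measure X) : ℝ≥0∞ :=
  (∫⁻ x, F.revF ((μ.rnDeriv γ x).toReal) ∂γ) + recessionOf F.revF * (μ.singularPart γ) Set.univ

section WOET

variable {X₁ X₂ : Type*} [MeasurableSpace X₁] [MeasurableSpace X₂]

/-- The weak entropy-transport cost
`ℰ_C(γ|μ₁,μ₂) = ℱ₁(γ₁|μ₁) + ℱ₂(γ₂|μ₂) + ∫ C(x₁, γ_{x₁}) dγ₁(x₁)`. -/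
def wCost [StandardBorelSpace X₂] [Nonempty X₂]
    (C : X₁ → ProbabilityMeasure X₂ → EReal) (F₁ F₂ : EntropyFn)
    (μ₁ : Measure X₁) (μ₂ : Measure X₂)
    (γ : Measure (X₁ × X₂)) (hγ : IsFiniteMeasure γ) : EReal :=
  haveI := hγ
  ((entF F₁ γ.fst μ₁ : ℝ≥0∞) : EReal) + ((entF F₂ γ.snd μ₂ : ℝ≥0∞) : EReal) +
    eIntegral γ.fst (fun x₁ => C x₁ ⟨γ.condKernel x₁, inferInstance⟩)

/-- The weak optimal entropy-transport value `ℰ_C(μ₁,μ₂)`. -/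
def wOpt [StandardBorelSpace X₂] [Nonempty X₂]
    (C : X₁ → ProbabilityMeasure X₂ → EReal) (F₁ F₂ : EntropyFn)
    (μ₁ : Measure X₁) (μ₂ : Measure X₂) : EReal :=
  sInf { e : EReal | ∃ (γ : Measure (X₁ × X₂)) (hγ : IsFiniteMeasure γ),
    e = wCost C F₁ F₂ μ₁ μ₂ γ hγ }

variable [TopologicalSpace X₁] [TopologicalSpace X₂]

/-- The dual feasible set `Λ`. -/
def lamSet (C : X₁ → ProbabilityMeasure X₂ → EReal) (F₁ F₂ : EntropyFn) :
    Set ((X₁ →ᵇ ℝ) × (X₂ →ᵇ ℝ)) :=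
  { φ | (∀ x, φ.1 x ∈ interior F₁.circDom) ∧ (∀ x, φ.2 x ∈ interior F₂.circDom) ∧
      ∀ (x₁ : X₁) (p : ProbabilityMeasure X₂),
        ((φ.1 x₁ + ∫ x₂, φ.2 x₂ ∂(p : Measure X₂) : ℝ) : EReal) ≤ C x₁ p }

/-- The dual feasible set `Λ_R`. -/
def lamRSet (C : X₁ → ProbabilityMeasure X₂ → EReal) (F₁ F₂ : EntropyFn) :
    Set ((X₁ →ᵇ ℝ) × (X₂ →ᵇ ℝ)) :=
  { φ | (∃ b : ℝ, ((b : ℝ) : EReal) < ((F₁.F 0 : ℝ≥0∞) : EReal) ∧ ∀ x, φ.1 x ≤ b) ∧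
        (∃ b : ℝ, ((b : ℝ) : EReal) < ((F₂.F 0 : ℝ≥0∞) : EReal) ∧ ∀ x, φ.2 x ≤ b) ∧
        ∀ (x₁ : X₁) (p : ProbabilityMeasure X₂),
          F₁.revConj (φ.1 x₁) + eIntegral (p : Measure X₂) (fun x₂ => F₂.revConj (φ.2 x₂))
            ≤ C x₁ p }

/-- The dual feasible set `Λ_ET` (constraints tested against all pairs of nonnegative finite
measures; on all other signed measures `ET = +∞`, so those constraints are vacuous). -/
def lamETSet [StandardBorelSpace X₂] [Nonempty X₂]
    (C : X₁ → ProbabilityMeasure X₂ → EReal) (F₁ F₂ : EntropyFn) :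
    Set ((X₁ →ᵇ ℝ) × (X₂ →ᵇ ℝ)) :=
  { φ | ∀ (μ₁ : Measure X₁) (μ₂ : Measure X₂), IsFiniteMeasure μ₁ → IsFiniteMeasure μ₂ →
      (((∫ x, φ.1 x ∂μ₁) + ∫ x, φ.2 x ∂μ₂ : ℝ) : EReal) ≤ wOpt C F₁ F₂ μ₁ μ₂ }

/-- The set `Λ_ET^<`. -/
def lamETltSet [StandardBorelSpace X₂] [Nonempty X₂]
    (C : X₁ → ProbabilityMeasure X₂ → EReal) (F₁ F₂ : EntropyFn) :
    Set ((X₁ →ᵇ ℝ) × (X₂ →ᵇ ℝ)) :=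
  { φ ∈ lamETSet C F₁ F₂ |
      (∃ b : ℝ, ((b : ℝ) : EReal) < ((F₁.F 0 : ℝ≥0∞) : EReal) ∧ ∀ x, φ.1 x ≤ b) ∧
      (∃ b : ℝ, ((b : ℝ) : EReal) < ((F₂.F 0 : ℝ≥0∞) : EReal) ∧ ∀ x, φ.2 x ≤ b) }

/-- `R_C φ(x₁) := inf_{p ∈ 𝒫(X₂)} (C(x₁,p) + ∫ φ dp)`. -/
def RCfun (C : X₁ → ProbabilityMeasure X₂ → EReal) (φ : X₂ →ᵇ ℝ) (x₁ : X₁) : EReal :=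
  ⨅ p : ProbabilityMeasure X₂, C x₁ p + ((∫ x₂, φ x₂ ∂(p : Measure X₂) : ℝ) : EReal)

/-- Property (BM) of an admissible entropy function on a space `X`. -/
def HasBM (X : Type*) [TopologicalSpace X] [MeasurableSpace X] (F : EntropyFn) : Prop :=
  ∀ ψ : X →ᵇ ℝ, (∃ b : ℝ, ((b : ℝ) : EReal) < ((F.F 0 : ℝ≥0∞) : EReal) ∧ ∀ x, ψ x ≤ b) →
    ∃ s : X → ℝ, Measurable s ∧ (∃ M : ℝ, ∀ x, |s x| ≤ M) ∧ (∀ x, 0 < s x) ∧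
      ∀ x, ((F.revF (s x) : ℝ≥0∞) : EReal) + F.revConj (ψ x) = ((s x * ψ x : ℝ) : EReal)

end WOET

/-- The functional `ET` extended to pairs of finite signed measures:
it equals `ℰ_C(μ₁,μ₂)` when both arguments are (induced by) nonnegative finite measures,
and `+∞` otherwise. -/
def ETsgn {X₁ X₂ : Type*} [MeasurableSpace X₁] [MeasurableSpace X₂]
    [StandardBorelSpace X₂] [Nonempty X₂]
    (C : X₁ → ProbabilityMeasure X₂ → EReal) (F₁ F₂ : EntropyFn)
    (ν₁ : SignedMeasure X₁) (ν₂ : SignedMeasure X₂) : EReal :=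
  sInf { e : EReal | ∃ (μ₁ : Measure X₁) (h₁ : IsFiniteMeasure μ₁)
      (μ₂ : Measure X₂) (h₂ : IsFiniteMeasure μ₂),
      ν₁ = @Measure.toSignedMeasure X₁ _ μ₁ h₁ ∧ ν₂ = @Measure.toSignedMeasure X₂ _ μ₂ h₂ ∧
      e = wOpt C F₁ F₂ μ₁ μ₂ }

section Martingale

variable {X : Set ℝ}

/-- The martingale condition for a finite measure on `X × X`:
`∫ y dγ_x(y) = x` for `γ₁`-a.e. `x`. -/
def martCond [StandardBorelSpace ↥X] [Nonempty ↥X]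
    (γ : Measure (↥X × ↥X)) (hγ : IsFiniteMeasure γ) : Prop :=
  haveI := hγ
  ∀ᵐ x ∂γ.fst, (∫ y, (y : ℝ) ∂(γ.condKernel x)) = (x : ℝ)

/-- The martingale optimal entropy transport value `ℰ_M(μ₁,μ₂)` (with an `EReal`-valued
cost `c`). -/
def eMart [StandardBorelSpace ↥X] [Nonempty ↥X]
    (c : ↥X → ↥X → EReal) (F₁ F₂ : EntropyFn) (μ₁ μ₂ : Measure ↥X) : EReal :=
  sInf { e : EReal | ∃ (γ : Measure (↥X × ↥X)) (hγ : IsFiniteMeasure γ), martCond γ hγ ∧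
    e = ((entF F₁ γ.fst μ₁ : ℝ≥0∞) : EReal) + ((entF F₂ γ.snd μ₂ : ℝ≥0∞) : EReal) +
        eIntegral γ (fun q => c q.1 q.2) }

/-- The martingale optimal entropy transport value `ℰ_M(μ₁,μ₂)` (with a `[0,∞]`-valued
cost `c`). -/
def eMartNN [StandardBorelSpace ↥X] [Nonempty ↥X]
    (c : ↥X → ↥X → ℝ≥0∞) (F₁ F₂ : EntropyFn) (μ₁ μ₂ : Measure ↥X) : EReal :=
  sInf { e : EReal | ∃ (γ : Measure (↥X × ↥X)) (hγ : IsFiniteMeasure γ), martCond γ hγ ∧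
    e = ((entF F₁ γ.fst μ₁ + entF F₂ γ.snd μ₂ + ∫⁻ q, c q.1 q.2 ∂γ : ℝ≥0∞) : EReal) }

/-- The dual feasible set `Λ_M` for the martingale problem. -/
def lamM (c : ↥X → ↥X → EReal) (F₁ F₂ : EntropyFn) : Set ((↥X →ᵇ ℝ) × (↥X →ᵇ ℝ)) :=
  { φ | (∀ x, φ.1 x ∈ interior F₁.circDom) ∧ (∀ x, φ.2 x ∈ interior F₂.circDom) ∧
      ∃ h : ↥X →ᵇ ℝ, ∀ x₁ x₂ : ↥X,
        ((φ.1 x₁ + φ.2 x₂ + h x₁ * ((x₂ : ℝ) - (x₁ : ℝ)) : ℝ) : EReal) ≤ c x₁ x₂ }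

/-- The perspective function `r·F(θ/r)` with the convention `r·F(θ/r) = θ·F'_∞` for `r = 0`. -/
def perspFn (F : EntropyFn) (r θ : ℝ) : ℝ≥0∞ :=
  if r = 0 then ENNReal.ofReal θ * F.recC else ENNReal.ofReal r * F.F (θ / r)

/-- The homogeneous marginal perspective cost `H(x₁,r₁;x₂,r₂)` (the dependence on
`(x₁,x₂)` is through the value `c = c(x₁,x₂)`). -/
def Hcost (F₁ F₂ : EntropyFn) (c : ℝ≥0∞) (r₁ r₂ : ℝ) : ℝ≥0∞ :=
  if c ≠ ∞ then
    ⨅ θ : Ioi (0:ℝ), perspFn F₁ r₁ (θ : ℝ) + perspFn F₂ r₂ (θ : ℝ) + ENNReal.ofReal (θ : ℝ) * c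
  else F₁.F 0 * ENNReal.ofReal r₁ + F₂.F 0 * ENNReal.ofReal r₂

/-- The functional `ℋ(μ₁,μ₂|γ)`. -/
def hMargFun (F₁ F₂ : EntropyFn) (c : ↥X → ↥X → ℝ≥0∞) (μ₁ μ₂ : Measure ↥X)
    (γ : Measure (↥X × ↥X)) : ℝ≥0∞ :=
  (∫⁻ q, Hcost F₁ F₂ (c q.1 q.2) ((μ₁.rnDeriv γ.fst q.1).toReal)
      ((μ₂.rnDeriv γ.snd q.2).toReal) ∂γ)
    + F₁.F 0 * (μ₁.singularPart γ.fst) Set.univ + F₂.F 0 * (μ₂.singularPart γ.snd) Set.univ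

/-- The functional `ℛ(μ₁,μ₂|γ)`. -/
def rMargFun (F₁ F₂ : EntropyFn) (c : ↥X → ↥X → ℝ≥0∞) (μ₁ μ₂ : Measure ↥X)
    (γ : Measure (↥X × ↥X)) : ℝ≥0∞ :=
  revEntF F₁ μ₁ γ.fst + revEntF F₂ μ₂ γ.snd + ∫⁻ q, c q.1 q.2 ∂γ

/-- The first `p`-homogeneous marginal of a measure on `Y × Y`, `Y = X × [0,∞)`. -/
def hMarg1 (p : ℝ) (α : Measure ((↥X × ℝ≥0) × (↥X × ℝ≥0))) : Measure ↥X :=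
  Measure.map (fun q => q.1.1) (α.withDensity fun q => (q.1.2 : ℝ≥0∞) ^ p)

/-- The second `p`-homogeneous marginal of a measure on `Y × Y`, `Y = X × [0,∞)`. -/
def hMarg2 (p : ℝ) (α : Measure ((↥X × ℝ≥0) × (↥X × ℝ≥0))) : Measure ↥X :=
  Measure.map (fun q => q.2.1) (α.withDensity fun q => (q.2.2 : ℝ≥0∞) ^ p)

/-- Membership in the homogeneous constraint set `ℋ^p_{M,≤}(μ₁,μ₂)`. -/
def memHpM (p : ℝ) (μ₁ μ₂ : Measure ↥X) (α : Measure ((↥X × ℝ≥0) × (↥X × ℝ≥0))) : Prop :=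
  IsFiniteMeasure α ∧ (∫⁻ q, (q.1.2 : ℝ≥0∞) ^ p + (q.2.2 : ℝ≥0∞) ^ p ∂α) ≠ ∞ ∧
    hMarg1 p α ≤ μ₁ ∧ hMarg2 p α ≤ μ₂ ∧
    ∀ h : ↥X →ᵇ ℝ, (∫ q, h q.1.1 * ((q.2.1 : ℝ) - (q.1.1 : ℝ)) ∂α) = 0

end Martingale

/-!
Integrating the constraint `φ₁(x) + φ₂(y) + h(x)(y - x) ≤ c(x, y)` against a martingale plan `γ`
kills the term with `h`, and Young's inequality for `F°` gives weak duality.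

For the converse, let `D` bound the dual value. The set of pairs `(u, r)` in `C(X × X) × ℝ` such
that some dual data `φ₁, φ₂, h` and some continuous `g ≤ c` satisfy
`φ₁ ⊕ φ₂ + h(x)(y - x) - g < u` and have dual value larger than `r` is open, convex and misses
`(0, D)`. Hahn–Banach separates the two, and since constant dual variables give a Slater point,
the separating functional is not vertical. It is monotone in `u`, so by Riesz it is a finite
measure `γ`, and for all admissible data
`∑ᵢ (∫ Fᵢ°(φᵢ) dμᵢ - ∫ φᵢ dγᵢ) + ∫ g dγ ≤ D + ∫ h(x)(y - x) dγ`.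
Scaling `h` forces `∫ h(x)(y - x) dγ = 0`, which is the martingale property, and the suprema over
`φ₁`, `φ₂` and `g` recover the two entropies and the cost, so `γ` has primal value at most `D`.
-/

namespace EntropyFn

/-! ### The concave conjugate of an entropy function -/

variable (F : EntropyFn)

/-- The concave conjugate `F°` as a real function. Outside `F.circDom`, where `F° = -∞`, its value
is the junk value `0`. -/
def circReal (t : ℝ) : ℝ := (F.circ t).toReal

lemma coe_le_circ_iff {m t : ℝ} :
    (m : EReal) ≤ F.circ t ↔ ∀ s, 0 ≤ s → ENNReal.ofReal (m - t * s) ≤ F.F s := by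
  have coe_le_add_iff (s : ℝ) (a : ℝ≥0∞) :
      (m : EReal) ≤ t * s + a ↔ ENNReal.ofReal (m - t * s) ≤ a := by
    rw [← EReal.coe_mul, ← EReal.coe_ennreal_le_coe_ennreal_iff, EReal.coe_ennreal_ofReal,
      add_comm, ← EReal.sub_le_iff_le_add (.inl (EReal.coe_ne_bot _)) (.inl (EReal.coe_ne_top _)),
      ← EReal.coe_sub, EReal.coe_strictMono.monotone.map_max, max_le_iff, EReal.coe_zero]
    exact (and_iff_left (EReal.coe_ennreal_nonneg a)).symm
  simp only [circ, le_iInf_iff, Subtype.forall, mem_Ici, coe_le_add_iff]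

lemma circ_ne_top (t : ℝ) : F.circ t ≠ ⊤ := by
  obtain ⟨s, hs, hFs⟩ := F.dom
  refine ne_top_of_le_ne_top ?_ (iInf_le _ ⟨s, hs.le⟩)
  exact EReal.add_ne_top (EReal.coe_mul t s ▸ EReal.coe_ne_top _) (by simpa using hFs)

variable {F}

lemma coe_circReal {t : ℝ} (ht : t ∈ F.circDom) : (F.circReal t : EReal) = F.circ t :=
  EReal.coe_toReal (F.circ_ne_top t) ht

lemma ofReal_circReal_sub_le {t : ℝ} (ht : t ∈ F.circDom) {s : ℝ} (hs : 0 ≤ s) :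
    ENNReal.ofReal (F.circReal t - t * s) ≤ F.F s :=
  F.coe_le_circ_iff.1 (coe_circReal ht).le s hs

lemma mem_circDom_and_le_circReal {m t : ℝ}
    (h : ∀ s, 0 ≤ s → ENNReal.ofReal (m - t * s) ≤ F.F s) :
    t ∈ F.circDom ∧ m ≤ F.circReal t := by
  have hm : (m : EReal) ≤ F.circ t := F.coe_le_circ_iff.2 h
  have ht : t ∈ F.circDom := ne_bot_of_le_ne_bot (EReal.coe_ne_bot m) hm
  exact ⟨ht, EReal.coe_le_coe_iff.1 (hm.trans_eq (coe_circReal ht).symm)⟩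

lemma mem_circDom_and_circReal_le_of_le {t t' : ℝ} (ht : t ∈ F.circDom) (htt' : t ≤ t') :
    t' ∈ F.circDom ∧ F.circReal t ≤ F.circReal t' :=
  mem_circDom_and_le_circReal fun s hs =>
    (ENNReal.ofReal_le_ofReal (by gcongr)).trans (ofReal_circReal_sub_le ht hs)

lemma mem_interior_circDom_of_lt {t t' : ℝ} (ht : t ∈ F.circDom) (htt' : t < t') :
    t' ∈ interior F.circDom :=
  mem_interior.2
    ⟨Ioi t, fun _ h => (mem_circDom_and_circReal_le_of_le ht (le_of_lt h)).1, isOpen_Ioi, htt'⟩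

variable (F)

lemma zero_mem_circDom_and_nonneg : (0 : ℝ) ∈ F.circDom ∧ 0 ≤ F.circReal 0 :=
  mem_circDom_and_le_circReal fun s _ => by simp

lemma zero_mem_circDom : (0 : ℝ) ∈ F.circDom := F.zero_mem_circDom_and_nonneg.1

lemma concaveOn_circReal : ConcaveOn ℝ F.circDom F.circReal := by
  have key {x y α β : ℝ} (hx : x ∈ F.circDom) (hy : y ∈ F.circDom) (hα : 0 ≤ α) (hβ : 0 ≤ β)
      (hαβ : α + β = 1) : α * x + β * y ∈ F.circDom ∧
        α * F.circReal x + β * F.circReal y ≤ F.circReal (α * x + β * y) := by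
    refine mem_circDom_and_le_circReal fun s hs => ?_
    have hle : α * F.circReal x + β * F.circReal y - (α * x + β * y) * s ≤
        max (F.circReal x - x * s) (F.circReal y - y * s) := by
      refine le_trans (le_of_eq ?_) (Convex.combo_le_max _ _ hα hβ hαβ)
      simp only [smul_eq_mul]
      ring
    refine (ENNReal.ofReal_le_ofReal hle).trans ?_
    rw [ENNReal.ofReal_max]
    exact max_le (ofReal_circReal_sub_le hx hs) (ofReal_circReal_sub_le hy hs)
  exact ⟨fun _ hx _ hy _ _ hα hβ hαβ => (key hx hy hα hβ hαβ).1,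
    fun _ hx _ hy _ _ hα hβ hαβ => (key hx hy hα hβ hαβ).2⟩

lemma continuousOn_circReal : ContinuousOn F.circReal (interior F.circDom) :=
  F.concaveOn_circReal.continuousOn_interior

/-! ### Biconjugation -/

/-- The epigraph of `F`. It is a subset of `ℝ × ℝ`, so that points where `F` is infinite do not
appear in it. -/
def epigraph : Set (ℝ × ℝ) := {p | 0 ≤ p.1 ∧ 0 ≤ p.2 ∧ F.F p.1 ≤ ENNReal.ofReal p.2}

lemma convex_epigraph : Convex ℝ F.epigraph := by
  rintro ⟨a, r⟩ ⟨ha, hr, har⟩ ⟨b, r'⟩ ⟨hb, hr', hbr⟩ α β hα hβ hαβ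
  obtain rfl : β = 1 - α := by linarith
  simp only at ha hr har hb hr' hbr
  refine ⟨add_nonneg (mul_nonneg hα ha) (mul_nonneg hβ hb),
    add_nonneg (mul_nonneg hα hr) (mul_nonneg hβ hr'), ?_⟩
  calc F.F (α * a + (1 - α) * b)
      ≤ ENNReal.ofReal α * F.F a + ENNReal.ofReal (1 - α) * F.F b :=
        F.convex' a ha b hb α hα (by linarith)
    _ ≤ ENNReal.ofReal α * ENNReal.ofReal r + ENNReal.ofReal (1 - α) * ENNReal.ofReal r' := by
        gcongr
    _ = ENNReal.ofReal (α * r + (1 - α) * r') := by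
        rw [ENNReal.ofReal_add (mul_nonneg hα hr) (mul_nonneg hβ hr'), ENNReal.ofReal_mul hα,
          ENNReal.ofReal_mul hβ]

lemma isClosed_epigraph : IsClosed F.epigraph := by
  have hclosed := lowerSemicontinuousOn_iff_isClosed_epigraph isClosed_Ici |>.1 F.lsc
  have hcont : Continuous fun p : ℝ × ℝ => (p.1, ENNReal.ofReal p.2) :=
    continuous_fst.prodMk (ENNReal.continuous_ofReal.comp continuous_snd)
  convert (hclosed.preimage hcont).inter (isClosed_le (continuous_const (y := 0)) continuous_snd)
    using 1
  ext p
  simp only [epigraph, mem_ofPred_eq, mem_inter_iff, mem_preimage, mem_Ici]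
  tauto

variable {F}

/-- A hyperplane separating `(s, M)` from the epigraph can be tilted so that it is not vertical:
the epigraph lies in the upper half-plane, so increasing `β` keeps it on the same side. -/
lemma exists_affine_lt_epigraph {s M : ℝ} (h : ENNReal.ofReal M < F.F s) :
    ∃ α β u : ℝ, 0 < β ∧ α * s + β * M < u ∧ ∀ p ∈ F.epigraph, u ≤ α * p.1 + β * p.2 := by
  obtain ⟨f, u, hu, hE⟩ := geometric_hahn_banach_point_closed F.convex_epigraph F.isClosed_epigraph
    (x := (s, M)) fun hmem => hmem.2.2.not_gt h
  obtain ⟨α, β, hf⟩ : ∃ α β : ℝ, ∀ p, f p = α * p.1 + β * p.2 := by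
    refine ⟨f (1, 0), f (0, 1), fun p => ?_⟩
    have hp : p = p.1 • (1, 0) + p.2 • (0, 1) := by ext <;> simp
    conv_lhs => rw [hp, map_add, map_smul, map_smul, smul_eq_mul, smul_eq_mul]
    ring
  simp only [hf] at hu hE
  have hβ : 0 ≤ β := by
    obtain ⟨s₀, hs₀, hFs₀⟩ := F.dom
    have hray (r : ℝ) (hr : (F.F s₀).toReal ≤ r) : u < α * s₀ + β * r :=
      hE (s₀, r) ⟨hs₀.le, ENNReal.toReal_nonneg.trans hr, ENNReal.le_ofReal_iff_toReal_le hFs₀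
        (ENNReal.toReal_nonneg.trans hr) |>.2 hr⟩
    by_contra! hneg
    have hlim : Tendsto (fun r => α * s₀ + β * r) atTop atBot :=
      tendsto_atBot_add_const_left _ _ (tendsto_id.const_mul_atTop_of_neg hneg)
    obtain ⟨r, hr, hru⟩ := (hlim.eventually_le_atBot u |>.and (eventually_ge_atTop _)).exists
    exact (hray r hru).not_ge hr
  obtain ⟨ε, hε, hεM⟩ := exists_pos_mul_lt (sub_pos.2 hu) M
  refine ⟨α, β + ε, u, by positivity, by linarith, fun p hp => ?_⟩
  linarith [hE p hp, mul_nonneg hε.le hp.2.1]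

lemma exists_lt_circReal_sub {s M : ℝ} (h : ENNReal.ofReal M < F.F s) :
    ∃ q ∈ F.circDom, M < F.circReal q - q * s := by
  obtain ⟨α, β, u, hβ, hs, hE⟩ := exists_affine_lt_epigraph h
  obtain ⟨hmem, hle⟩ : α / β ∈ F.circDom ∧ u / β ≤ F.circReal (α / β) := by
    refine mem_circDom_and_le_circReal fun t ht => ?_
    rcases eq_or_ne (F.F t) ⊤ with htop | hfin
    · exact htop ▸ le_top
    have hu := hE (t, (F.F t).toReal) ⟨ht, ENNReal.toReal_nonneg, (ENNReal.ofReal_toReal hfin).ge⟩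
    rw [ENNReal.ofReal_le_iff_le_toReal hfin, div_mul_eq_mul_div, ← sub_div, div_le_iff₀ hβ]
    linarith
  refine ⟨_, hmem, lt_of_lt_of_le ?_ (sub_le_sub_right hle _)⟩
  rw [div_mul_eq_mul_div, ← sub_div, lt_div_iff₀ hβ]
  linarith

lemma exists_mem_interior_lt_circReal_sub {s M : ℝ} (h : ENNReal.ofReal M < F.F s) :
    ∃ q ∈ interior F.circDom, M < F.circReal q - q * s := by
  obtain ⟨q, hq, hlt⟩ := exists_lt_circReal_sub h
  obtain ⟨ε, hε, hεs⟩ := exists_pos_mul_lt (sub_pos.2 hlt) s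
  refine ⟨q + ε, mem_interior_circDom_of_lt hq (by linarith), ?_⟩
  linarith [(mem_circDom_and_circReal_le_of_le hq (by linarith : q ≤ q + ε)).2]

variable (F)

lemma exists_seq_eq_iSup_circReal_sub :
    ∃ u : ℕ → ℝ, (∀ n, u n ∈ F.circDom) ∧
      ∀ s, 0 ≤ s → F.F s = ⨆ n, ENNReal.ofReal (F.circReal (u n) - u n * s) := by
  have : Nonempty (interior F.circDom) :=
    ⟨1, mem_interior_circDom_of_lt F.zero_mem_circDom one_pos⟩
  refine ⟨fun n => (TopologicalSpace.denseSeq (interior F.circDom) n : ℝ),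
    fun n => interior_subset (Subtype.prop _),
    fun s hs => le_antisymm (le_of_forall_lt fun a ha => ?_)
      (iSup_le fun n => ofReal_circReal_sub_le (interior_subset (Subtype.prop _)) hs)⟩
  have hcont : Continuous fun q : interior F.circDom => F.circReal q - q * s :=
    (continuousOn_iff_continuous_domRestrict.1 F.continuousOn_circReal).sub (by fun_prop)
  obtain ⟨q, hq, hlt⟩ := exists_mem_interior_lt_circReal_sub
    ((ENNReal.ofReal_toReal ha.ne_top).trans_lt ha)
  obtain ⟨n, hn⟩ := (TopologicalSpace.denseRange_denseSeq (interior F.circDom)).exists_mem_open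
    (hcont.isOpen_preimage _ (isOpen_Ioi (a := a.toReal))) ⟨⟨q, hq⟩, hlt⟩
  exact lt_iSup_iff.2 ⟨n, (ENNReal.lt_ofReal_iff_toReal_lt ha.ne_top).2 hn⟩

/-! ### The recession constant -/

variable {F}

lemma ofReal_neg_le_recC {t : ℝ} (ht : t ∈ F.circDom) : ENNReal.ofReal (-t) ≤ F.recC := by
  have hlim : Tendsto (fun s => ENNReal.ofReal (F.circReal t / s - t)) atTop
      (𝓝 (ENNReal.ofReal (-t))) := by
    refine ENNReal.tendsto_ofReal ?_
    simpa using (tendsto_const_nhds.div_atTop tendsto_id).sub_const t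
  rw [← hlim.limsup_eq]
  refine limsup_le_limsup ?_
  filter_upwards [eventually_gt_atTop 0] with s hs
  calc ENNReal.ofReal (F.circReal t / s - t)
      = ENNReal.ofReal (F.circReal t - t * s) / ENNReal.ofReal s := by
        rw [← ENNReal.ofReal_div_of_pos hs, sub_div, mul_div_cancel_right₀ _ hs.ne']
    _ ≤ F.F s / ENNReal.ofReal s := by gcongr; exact ofReal_circReal_sub_le ht hs.le

lemma recC_le_of_forall_mem_circDom {t : ℝ} (ht : ∀ q ∈ F.circDom, t ≤ q) :
    F.recC ≤ ENNReal.ofReal (-t) := by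
  obtain ⟨s₀, hs₀, hFs₀⟩ := F.dom
  obtain ⟨u, hu, hF⟩ := F.exists_seq_eq_iSup_circReal_sub
  have hgrowth (s : ℝ) (hs : s₀ ≤ s) : F.F s ≤ F.F s₀ + ENNReal.ofReal (-t * (s - s₀)) := by
    rw [hF s (hs₀.le.trans hs)]
    refine iSup_le fun n => ?_
    calc ENNReal.ofReal (F.circReal (u n) - u n * s)
        ≤ ENNReal.ofReal ((F.circReal (u n) - u n * s₀) + -t * (s - s₀)) := by
          refine ENNReal.ofReal_le_ofReal ?_
          linarith [mul_le_mul_of_nonneg_right (ht _ (hu n)) (sub_nonneg.2 hs)]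
      _ ≤ _ := ENNReal.ofReal_add_le.trans
          (add_le_add_left (ofReal_circReal_sub_le (hu n) hs₀.le) _)
  have hlim : Tendsto (fun s => F.F s₀ / ENNReal.ofReal s + ENNReal.ofReal (-t)) atTop
      (𝓝 (ENNReal.ofReal (-t))) := by
    simpa using (ENNReal.Tendsto.const_div ENNReal.tendsto_ofReal_atTop (.inr hFs₀)).add_const
      (ENNReal.ofReal (-t))
  rw [← hlim.limsup_eq]
  refine limsup_le_limsup ?_
  have ht₀ : t ≤ 0 := ht 0 F.zero_mem_circDom
  filter_upwards [eventually_ge_atTop s₀] with s hs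
  have hspos : 0 < s := hs₀.trans_le hs
  calc F.F s / ENNReal.ofReal s
      ≤ (F.F s₀ + ENNReal.ofReal (-t * s)) / ENNReal.ofReal s := by
        gcongr
        exact (hgrowth s hs).trans (by gcongr <;> linarith)
    _ = F.F s₀ / ENNReal.ofReal s + ENNReal.ofReal (-t) := by
        rw [ENNReal.add_div, ← ENNReal.ofReal_div_of_pos hspos, mul_div_cancel_right₀ _ hspos.ne']

variable (F)

lemma recC_eq_iSup : F.recC = ⨆ q : F.circDom, ENNReal.ofReal (-q) := by
  refine le_antisymm ?_ (iSup_le fun q => ofReal_neg_le_recC q.2)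
  by_contra! hlt
  refine hlt.not_ge ?_
  rw [← ENNReal.ofReal_toReal hlt.ne_top, ← neg_neg (ENNReal.toReal _)]
  refine recC_le_of_forall_mem_circDom fun q hq => neg_le.1 ?_
  exact (ENNReal.ofReal_le_iff_le_toReal hlt.ne_top).1
    (le_iSup (fun q : F.circDom => ENNReal.ofReal (-q)) ⟨q, hq⟩)

lemma exists_mem_interior_circDom_add_lt (F₁ F₂ : EntropyFn) {K : ℝ}
    (h : 0 < ((F₁.recC + F₂.recC : ℝ≥0∞) : EReal) + K) :
    ∃ t₁ ∈ interior F₁.circDom, ∃ t₂ ∈ interior F₂.circDom, t₁ + t₂ < K := by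
  obtain ⟨q₁, hq₁, q₂, hq₂, hlt⟩ : ∃ q₁ ∈ F₁.circDom, ∃ q₂ ∈ F₂.circDom, q₁ + q₂ < K := by
    by_contra! hle
    have hK : K ≤ 0 := by simpa using hle 0 F₁.zero_mem_circDom 0 F₂.zero_mem_circDom
    have hmin {F : EntropyFn} (q : F.circDom) :
        min (q : ℝ) 0 ∈ F.circDom ∧ ENNReal.ofReal (-q) = ENNReal.ofReal (-min (q : ℝ) 0) := by
      rcases le_total (q : ℝ) 0 with hq | hq
      · simp [min_eq_left hq, q.2]
      · simp [hq, F.zero_mem_circDom]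
    have hrec : F₁.recC + F₂.recC ≤ ENNReal.ofReal (-K) := by
      have : Nonempty F₁.circDom := ⟨0, F₁.zero_mem_circDom⟩
      have : Nonempty F₂.circDom := ⟨0, F₂.zero_mem_circDom⟩
      rw [recC_eq_iSup, recC_eq_iSup]
      refine ENNReal.iSup_add_iSup_le fun q₁ q₂ => ?_
      rw [(hmin q₁).2, (hmin q₂).2, ← ENNReal.ofReal_add (by simp) (by simp)]
      exact ENNReal.ofReal_le_ofReal (by linarith [hle _ (hmin q₁).1 _ (hmin q₂).1])
    have : ((F₁.recC + F₂.recC : ℝ≥0∞) : EReal) ≤ (-K : ℝ) := by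
      rw [← max_eq_left (neg_nonneg.2 hK), ← EReal.coe_ennreal_ofReal]
      exact EReal.coe_ennreal_le_coe_ennreal_iff.2 hrec
    refine h.not_ge ((add_le_add_left this _).trans_eq ?_)
    rw [← EReal.coe_add, neg_add_cancel, EReal.coe_zero]
  refine ⟨q₁ + (K - q₁ - q₂) / 3, mem_interior_circDom_of_lt hq₁ (by linarith),
    q₂ + (K - q₁ - q₂) / 3, mem_interior_circDom_of_lt hq₂ (by linarith), by linarith⟩

end EntropyFn

/-! ### Duality for the entropy functional -/

lemma integrable_of_continuous_of_compactSpace {Y : Type*} [TopologicalSpace Y] [CompactSpace Y]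
    [MeasurableSpace Y] [OpensMeasurableSpace Y] {f : Y → ℝ} (hf : Continuous f) (μ : Measure Y)
    [IsFiniteMeasureOnCompacts μ] : Integrable f μ :=
  hf.integrable_of_hasCompactSupport (.of_compactSpace f)

lemma ofReal_integral_le_lintegral_ofReal {α : Type*} [MeasurableSpace α] {μ : Measure α}
    {f : α → ℝ} (hf : Integrable f μ) :
    ENNReal.ofReal (∫ x, f x ∂μ) ≤ ∫⁻ x, ENNReal.ofReal (f x) ∂μ := by
  rw [integral_eq_lintegral_pos_part_sub_lintegral_neg_part hf,
    ENNReal.ofReal_le_iff_le_toReal hf.lintegral_lt_top.ne]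
  exact sub_le_self _ ENNReal.toReal_nonneg

lemma integrable_mul_rnDeriv {α : Type*} [MeasurableSpace α] {γ μ : Measure α}
    [IsFiniteMeasure γ] [SigmaFinite μ] {φ : α → ℝ} (hφ : Integrable φ γ) :
    Integrable (fun x => φ x * (γ.rnDeriv μ x).toReal) μ :=
  (integrable_withDensity_iff (Measure.measurable_rnDeriv γ μ) (Measure.rnDeriv_lt_top γ μ)).1
    (hφ.mono_measure (Measure.withDensity_rnDeriv_le γ μ))

lemma integral_eq_integral_singularPart_add {α : Type*} [MeasurableSpace α] {γ μ : Measure α}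
    [IsFiniteMeasure γ] [SigmaFinite μ] {φ : α → ℝ} (hφ : Integrable φ γ) :
    ∫ x, φ x ∂γ = ∫ x, φ x ∂(γ.singularPart μ) + ∫ x, φ x * (γ.rnDeriv μ x).toReal ∂μ := by
  conv_lhs => rw [γ.haveLebesgueDecomposition_add μ]
  rw [integral_add_measure (hφ.mono_measure (Measure.singularPart_le γ μ))
    (hφ.mono_measure (Measure.withDensity_rnDeriv_le γ μ)),
    integral_withDensity_eq_integral_toReal_smul (Measure.measurable_rnDeriv γ μ)
      (Measure.rnDeriv_lt_top γ μ)]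
  simp only [smul_eq_mul, mul_comm]

lemma exists_seq_continuousMap_tendsto_ae {Y : Type*} [TopologicalSpace Y] [NormalSpace Y]
    [MeasurableSpace Y] [BorelSpace Y] {ν : Measure Y} [IsFiniteMeasure ν] [ν.WeaklyRegular]
    {φ : Y → ℝ} (hφ : Measurable φ) {a b : ℝ} (hab : a ≤ b) (hmem : ∀ x, φ x ∈ Icc a b) :
    ∃ g : ℕ → C(Y, ℝ), (∀ n x, g n x ∈ Icc a b) ∧
      ∀ᵐ x ∂ν, Tendsto (fun n => g n x) atTop (𝓝 (φ x)) := by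
  have hLp : MemLp φ 1 ν := .of_bound hφ.aestronglyMeasurable (max |a| |b|)
    (.of_forall fun x => abs_le_max_abs_abs (hmem x).1 (hmem x).2)
  choose g hg hgLp using fun n : ℕ =>
    hLp.exists_boundedContinuous_eLpNorm_sub_le ENNReal.one_ne_top
      (ε := (n + 1 : ℝ≥0∞)⁻¹) (by simp)
  have hmeas : TendstoInMeasure ν (fun n => ⇑(g n)) atTop φ := by
    refine tendstoInMeasure_of_tendsto_eLpNorm one_ne_zero
      (fun n => (hgLp n).aestronglyMeasurable) hLp.aestronglyMeasurable ?_
    refine tendsto_of_tendsto_of_tendsto_of_le_of_le tendsto_const_nhds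
      ((tendsto_add_atTop_iff_nat 1).2 ENNReal.tendsto_inv_nat_nhds_zero) (fun _ => zero_le)
      fun n => ?_
    simpa [eLpNorm_sub_comm] using hg n
  obtain ⟨ns, -, hns⟩ := hmeas.exists_seq_tendsto_ae
  refine ⟨fun n => ⟨fun x => projIcc a b hab (g (ns n) x), by fun_prop⟩,
    fun n x => Subtype.prop _, ?_⟩
  filter_upwards [hns] with x hx
  have hproj :=
    ((continuous_subtype_val.comp (continuous_projIcc (h := hab))).tendsto (φ x)).comp hx
  rwa [Function.comp_apply, projIcc_of_mem hab (hmem x)] at hproj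

namespace EntropyFn

/-- The admissible dual variables of the entropy functional: continuous functions with values in
the interior of the domain of `F°`. -/
def dualVars (F : EntropyFn) (Y : Type*) [TopologicalSpace Y] : Set C(Y, ℝ) :=
  {φ | ∀ x, φ x ∈ interior F.circDom}

/-- The dual functional `φ ↦ ∫ F°(φ) dμ` of the entropy functional. -/
def dualInt (F : EntropyFn) {Y : Type*} [TopologicalSpace Y] [MeasurableSpace Y] (μ : Measure Y)
    (φ : C(Y, ℝ)) : ℝ :=
  ∫ x, F.circReal (φ x) ∂μ

lemma exists_simpleFunc_circReal_sub_le {F : EntropyFn} {α : Type*} [MeasurableSpace α]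
    {f : α → ℝ} (hf : Measurable f) {u : ℕ → ℝ} (hu : ∀ i, u i ∈ F.circDom) (n : ℕ) :
    ∃ φ : SimpleFunc α ℝ, (∀ x, φ x ∈ F.circDom) ∧
      (∀ x, 0 ≤ F.circReal (φ x) - φ x * f x) ∧
      ∀ i < n, ∀ x, F.circReal (u i) - u i * f x ≤ F.circReal (φ x) - φ x * f x := by
  induction n with
  | zero =>
    obtain ⟨h0, hnonneg⟩ := F.zero_mem_circDom_and_nonneg
    exact ⟨.const α 0, fun _ => h0, fun _ => by simpa using hnonneg, by simp⟩
  | succ n ih =>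
    obtain ⟨φ, hφ, hnonneg, hle⟩ := ih
    let s : Set α := {x | F.circReal (φ x) - φ x * f x ≤ F.circReal (u n) - u n * f x}
    have hs : MeasurableSet s :=
      measurableSet_le ((φ.map F.circReal).measurable.sub (φ.measurable.mul hf))
        (measurable_const.sub (measurable_const.mul hf))
    classical
    refine ⟨.piecewise s hs (.const α (u n)) φ, fun x => ?_, fun x => ?_, fun i hi x => ?_⟩ <;>
      by_cases hx : x ∈ s <;> simp only [SimpleFunc.coe_piecewise, SimpleFunc.coe_const,
        Function.const_apply, piecewise_eq_of_mem, piecewise_eq_of_notMem, hx, not_false_eq_true]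
    · exact hu n
    · exact hφ x
    · exact (hnonneg x).trans hx
    · exact hnonneg x
    · rcases Nat.lt_succ_iff_lt_or_eq.1 hi with hi | rfl
      exacts [(hle i hi x).trans hx, le_rfl]
    · rcases Nat.lt_succ_iff_lt_or_eq.1 hi with hi | rfl
      exacts [hle i hi x, (not_le.1 hx).le]

variable {F : EntropyFn} {Y : Type*} [TopologicalSpace Y]

lemma continuous_circReal_comp {φ : C(Y, ℝ)} (hφ : φ ∈ F.dualVars Y) :
    Continuous fun x => F.circReal (φ x) :=
  F.continuousOn_circReal.comp_continuous φ.continuous hφ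

variable (F) in
lemma const_one_mem_dualVars : ContinuousMap.const Y 1 ∈ F.dualVars Y := fun _ =>
  mem_interior_circDom_of_lt F.zero_mem_circDom one_pos

variable [CompactSpace Y] [MeasurableSpace Y]

section Weak

variable [OpensMeasurableSpace Y]

lemma integrable_circReal_comp {φ : C(Y, ℝ)} (hφ : φ ∈ F.dualVars Y) (μ : Measure Y)
    [IsFiniteMeasure μ] : Integrable (fun x => F.circReal (φ x)) μ :=
  integrable_of_continuous_of_compactSpace (continuous_circReal_comp hφ) μ

variable (F) in
lemma concaveOn_dualInt (μ : Measure Y) [IsFiniteMeasure μ] :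
    ConcaveOn ℝ (F.dualVars Y) (F.dualInt μ) := by
  have hconv : Convex ℝ (F.dualVars Y) := fun φ hφ ψ hψ a b ha hb hab x =>
    F.concaveOn_circReal.1.interior (hφ x) (hψ x) ha hb hab
  refine ⟨hconv, fun φ hφ ψ hψ a b ha hb hab => ?_⟩
  have hφi := (integrable_circReal_comp hφ μ).const_mul a
  have hψi := (integrable_circReal_comp hψ μ).const_mul b
  simp only [dualInt, smul_eq_mul, ← integral_const_mul]
  rw [← integral_add hφi hψi]
  exact integral_mono (hφi.add hψi) (integrable_circReal_comp (hconv hφ hψ ha hb hab) μ)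
    fun x => F.concaveOn_circReal.2 (interior_subset (hφ x)) (interior_subset (hψ x)) ha hb hab

lemma ofReal_dualInt_sub_le_entF {φ : C(Y, ℝ)} (hφ : φ ∈ F.dualVars Y) (γ μ : Measure Y)
    [IsFiniteMeasure γ] [IsFiniteMeasure μ] :
    ENNReal.ofReal (F.dualInt μ φ - ∫ x, φ x ∂γ) ≤ entF F γ μ := by
  have hφγ := integrable_of_continuous_of_compactSpace φ.continuous γ
  have hφs := integrable_of_continuous_of_compactSpace φ.continuous (γ.singularPart μ)
  have hG := integrable_circReal_comp hφ μ
  have hφf := integrable_mul_rnDeriv (μ := μ) hφγ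
  have hmem (x : Y) : φ x ∈ F.circDom := interior_subset (hφ x)
  calc ENNReal.ofReal (F.dualInt μ φ - ∫ x, φ x ∂γ)
      = ENNReal.ofReal (∫ x, (F.circReal (φ x) - φ x * (γ.rnDeriv μ x).toReal) ∂μ +
          ∫ x, -φ x ∂(γ.singularPart μ)) := by
        rw [integral_eq_integral_singularPart_add (μ := μ) hφγ, integral_sub hG hφf,
          integral_neg, dualInt]
        ring_nf
    _ ≤ ∫⁻ x, ENNReal.ofReal (F.circReal (φ x) - φ x * (γ.rnDeriv μ x).toReal) ∂μ +
          ∫⁻ x, ENNReal.ofReal (-φ x) ∂(γ.singularPart μ) :=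
        ENNReal.ofReal_add_le.trans (add_le_add (ofReal_integral_le_lintegral_ofReal (hG.sub hφf))
          (ofReal_integral_le_lintegral_ofReal hφs.neg))
    _ ≤ ∫⁻ x, F.F (γ.rnDeriv μ x).toReal ∂μ + ∫⁻ _, F.recC ∂(γ.singularPart μ) := by
        gcongr with x x
        exacts [ofReal_circReal_sub_le (hmem x) ENNReal.toReal_nonneg,
          ofReal_neg_le_recC (hmem x)]
    _ = entF F γ μ := by rw [lintegral_const, entF]

end Weak

variable [TopologicalSpace.PseudoMetrizableSpace Y] [BorelSpace Y]
  {γ μ : Measure Y} [IsFiniteMeasure γ] [IsFiniteMeasure μ] {B : ℝ}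

lemma integral_sub_le_of_forall_dualVars
    (hB : ∀ φ ∈ F.dualVars Y, F.dualInt μ φ - ∫ x, φ x ∂γ ≤ B) {φ : Y → ℝ} (hφ : Measurable φ)
    {a b : ℝ} (ha : a ∈ interior F.circDom) (hb : b ∈ interior F.circDom) (hab : a ≤ b)
    (hmem : ∀ x, φ x ∈ Icc a b) : ∫ x, F.circReal (φ x) ∂μ - ∫ x, φ x ∂γ ≤ B := by
  have hsub : Icc a b ⊆ interior F.circDom :=
    F.concaveOn_circReal.1.interior.ordConnected.out ha hb
  obtain ⟨C, hC⟩ := isCompact_Icc.exists_bound_of_continuousOn (F.continuousOn_circReal.mono hsub)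
  obtain ⟨g, hg, hlim⟩ := exists_seq_continuousMap_tendsto_ae (ν := μ + γ) hφ hab hmem
  have hgdual (n : ℕ) : g n ∈ F.dualVars Y := fun x => hsub (hg n x)
  rw [ae_add_measure_iff] at hlim
  have hlimμ : Tendsto (fun n => F.dualInt μ (g n)) atTop (𝓝 (∫ x, F.circReal (φ x) ∂μ)) := by
    refine tendsto_integral_of_dominated_convergence (fun _ => C)
      (fun n => (continuous_circReal_comp (hgdual n)).aestronglyMeasurable) (integrable_const C)
      (fun n => .of_forall fun x => hC _ (hg n x)) ?_
    filter_upwards [hlim.1] with x hx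
    exact (F.continuousOn_circReal.continuousAt
      (isOpen_interior.mem_nhds (hsub (hmem x)))).tendsto.comp hx
  have hlimγ : Tendsto (fun n => ∫ x, g n x ∂γ) atTop (𝓝 (∫ x, φ x ∂γ)) :=
    tendsto_integral_of_dominated_convergence (fun _ => max |a| |b|)
      (fun n => (g n).continuous.aestronglyMeasurable) (integrable_const _)
      (fun n => .of_forall fun x => abs_le_max_abs_abs (hg n x).1 (hg n x).2) hlim.2
  exact le_of_tendsto' (hlimμ.sub hlimγ) fun n => hB _ (hgdual n)

/-- A simple function may take values on the boundary of the domain: raise it by `ε`. -/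
lemma integral_simpleFunc_sub_le
    (hB : ∀ φ ∈ F.dualVars Y, F.dualInt μ φ - ∫ x, φ x ∂γ ≤ B) {φ : SimpleFunc Y ℝ}
    (hφ : ∀ x, φ x ∈ F.circDom) : ∫ x, F.circReal (φ x) ∂μ - ∫ x, φ x ∂γ ≤ B := by
  rcases isEmpty_or_nonempty Y with hY | hY
  · simpa [dualInt, Measure.eq_zero_of_isEmpty] using hB 0 isEmptyElim
  obtain ⟨-, ⟨xmin, rfl⟩, hmin⟩ := exists_min_image _ id φ.finite_range (range_nonempty φ)
  obtain ⟨-, ⟨xmax, rfl⟩, hmax⟩ := exists_max_image _ id φ.finite_range (range_nonempty φ)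
  simp only [forall_mem_range, id] at hmin hmax
  have hint {ε : ℝ} (hε : 0 < ε) (x : Y) : φ x + ε ∈ interior F.circDom :=
    mem_interior_circDom_of_lt (hφ x) (lt_add_of_pos_right _ hε)
  have hraise (ε : ℝ) (hε : 0 < ε) :
      ∫ x, F.circReal (φ x) ∂μ - ∫ x, φ x ∂γ ≤ B + ε * γ.real univ := by
    have hle := integral_sub_le_of_forall_dualVars hB (φ.measurable.add_const ε) (hint hε xmin)
      (hint hε xmax) (by gcongr; exact hmin xmax)
      fun x => ⟨by gcongr; exact hmin x, by gcongr; exact hmax x⟩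
    have hmono : ∫ x, F.circReal (φ x) ∂μ ≤ ∫ x, F.circReal (φ x + ε) ∂μ :=
      integral_mono (SimpleFunc.integrable_of_isFiniteMeasure (φ.map F.circReal))
        (SimpleFunc.integrable_of_isFiniteMeasure (φ.map fun t => F.circReal (t + ε)))
        fun x => (mem_circDom_and_circReal_le_of_le (hφ x) (le_add_of_nonneg_right hε.le)).2
    rw [integral_add φ.integrable_of_isFiniteMeasure (integrable_const ε), integral_const,
      smul_eq_mul] at hle
    linarith
  have hlim : Tendsto (fun ε : ℝ => B + ε * γ.real univ) (𝓝[>] 0) (𝓝 (B + 0 * γ.real univ)) :=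
    tendsto_nhdsWithin_of_tendsto_nhds ((by fun_prop : Continuous _).tendsto 0)
  rw [zero_mul, add_zero] at hlim
  exact ge_of_tendsto hlim (eventually_mem_nhdsWithin.mono hraise)

lemma integral_simpleFunc_sub_add_singularPart_le
    (hB : ∀ φ ∈ F.dualVars Y, F.dualInt μ φ - ∫ x, φ x ∂γ ≤ B) {φ : SimpleFunc Y ℝ}
    (hφ : ∀ x, φ x ∈ F.circDom) {p : ℝ} (hp : p ∈ F.circDom) :
    ∫ x, (F.circReal (φ x) - φ x * (γ.rnDeriv μ x).toReal) ∂μ ≤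
      B + p * (γ.singularPart μ).real univ := by
  obtain ⟨s, hs, hσs, hμs⟩ := Measure.mutuallySingular_singularPart γ μ
  classical
  let ψ : SimpleFunc Y ℝ := .piecewise s hs φ (.const Y p)
  have hψμ : ψ =ᵐ[μ] φ := by
    filter_upwards [compl_mem_ae_iff.2 hμs] with x hx
    simp_all [ψ]
  have hψσ : ψ =ᵐ[γ.singularPart μ] fun _ => p := by
    filter_upwards [compl_mem_ae_iff.2 hσs] with x hx
    simp_all [ψ]
  have hψ (x : Y) : ψ x ∈ F.circDom := by
    by_cases hx : x ∈ s <;> simp [ψ, hx, hφ x, hp]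
  have hG : ∫ x, F.circReal (ψ x) ∂μ = ∫ x, F.circReal (φ x) ∂μ :=
    integral_congr_ae (hψμ.fun_comp F.circReal)
  have hf : ∫ x, ψ x * (γ.rnDeriv μ x).toReal ∂μ = ∫ x, φ x * (γ.rnDeriv μ x).toReal ∂μ :=
    integral_congr_ae (hψμ.mul (ae_eq_refl _))
  have hp' : ∫ x, ψ x ∂(γ.singularPart μ) = p * (γ.singularPart μ).real univ := by
    rw [integral_congr_ae hψσ, integral_const, smul_eq_mul, mul_comm]
  have hle := integral_simpleFunc_sub_le hB hψ
  rw [integral_eq_integral_singularPart_add (μ := μ) ψ.integrable_of_isFiniteMeasure,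
    hG, hf, hp'] at hle
  have hGint : Integrable (fun x => F.circReal (φ x)) μ :=
    (φ.map F.circReal).integrable_of_isFiniteMeasure
  rw [integral_sub hGint (integrable_mul_rnDeriv φ.integrable_of_isFiniteMeasure)]
  linarith

lemma lintegral_rnDeriv_le_of_forall_dualVars
    (hB : ∀ φ ∈ F.dualVars Y, F.dualInt μ φ - ∫ x, φ x ∂γ ≤ B) {p : ℝ} (hp : p ∈ F.circDom) :
    0 ≤ B + p * (γ.singularPart μ).real univ ∧ ∫⁻ x, F.F (γ.rnDeriv μ x).toReal ∂μ ≤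
      ENNReal.ofReal (B + p * (γ.singularPart μ).real univ) := by
  have hf : Measurable fun x => (γ.rnDeriv μ x).toReal :=
    (Measure.measurable_rnDeriv γ μ).ennreal_toReal
  obtain ⟨u, hu, hF⟩ := F.exists_seq_eq_iSup_circReal_sub
  choose φ hφ hnonneg hle using exists_simpleFunc_circReal_sub_le hf hu
  have hbound (n : ℕ) := integral_simpleFunc_sub_add_singularPart_le hB (hφ n) hp
  refine ⟨(integral_nonneg (hnonneg 0)).trans (hbound 0), ?_⟩
  let g (n : ℕ) (x : Y) : ℝ := F.circReal (φ n x) - φ n x * (γ.rnDeriv μ x).toReal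
  have hgint (n : ℕ) : Integrable (g n) μ :=
    (SimpleFunc.integrable_of_isFiniteMeasure ((φ n).map F.circReal)).sub
      (integrable_mul_rnDeriv (φ n).integrable_of_isFiniteMeasure)
  calc ∫⁻ x, F.F (γ.rnDeriv μ x).toReal ∂μ
      ≤ ∫⁻ x, liminf (fun n => ENNReal.ofReal (g n x)) atTop ∂μ := by
        refine lintegral_mono fun x => ?_
        rw [hF _ ENNReal.toReal_nonneg]
        exact iSup_le fun i => le_liminf_of_le (by isBoundedDefault)
          ((eventually_gt_atTop i).mono fun n hn => ENNReal.ofReal_le_ofReal (hle n i hn x))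
    _ ≤ liminf (fun n => ∫⁻ x, ENNReal.ofReal (g n x) ∂μ) atTop :=
        lintegral_liminf_le' fun n => (hgint n).aemeasurable.ennreal_ofReal
    _ ≤ ENNReal.ofReal (B + p * (γ.singularPart μ).real univ) := by
        refine liminf_le_of_frequently_le' (.of_forall fun n => ?_)
        rw [← ofReal_integral_eq_lintegral_ofReal (hgint n) (.of_forall (hnonneg n))]
        exact ENNReal.ofReal_le_ofReal (hbound n)

theorem coe_entF_le_of_forall_dualVars
    (hB : ∀ φ ∈ F.dualVars Y, F.dualInt μ φ - ∫ x, φ x ∂γ ≤ B) :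
    ((entF F γ μ : ℝ≥0∞) : EReal) ≤ (B : EReal) := by
  have hB0 : 0 ≤ B := by
    simpa using (lintegral_rnDeriv_le_of_forall_dualVars hB F.zero_mem_circDom).1
  suffices h : entF F γ μ ≤ ENNReal.ofReal B by
    simpa [EReal.coe_ennreal_ofReal, hB0] using EReal.coe_ennreal_le_coe_ennreal_iff.2 h
  have : Nonempty F.circDom := ⟨⟨0, F.zero_mem_circDom⟩⟩
  rw [entF, F.recC_eq_iSup, ENNReal.iSup_mul, ENNReal.add_iSup]
  refine iSup_le fun q => ?_
  have hp : min (q : ℝ) 0 ∈ F.circDom := min_rec' (· ∈ F.circDom) q.2 F.zero_mem_circDom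
  have hq : ENNReal.ofReal (-q) = ENNReal.ofReal (-min (q : ℝ) 0) := by
    rcases le_total (q : ℝ) 0 with h | h <;> simp [h]
  obtain ⟨hnonneg, hle⟩ := lintegral_rnDeriv_le_of_forall_dualVars hB hp
  calc ∫⁻ x, F.F (γ.rnDeriv μ x).toReal ∂μ + ENNReal.ofReal (-q) * γ.singularPart μ univ
      ≤ ENNReal.ofReal (B + min (q : ℝ) 0 * (γ.singularPart μ).real univ) +
          ENNReal.ofReal (-min (q : ℝ) 0 * (γ.singularPart μ).real univ) := by
        rw [hq, ENNReal.ofReal_mul' measureReal_nonneg, ofReal_measureReal]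
        gcongr
    _ = ENNReal.ofReal B := by
        rw [← ENNReal.ofReal_add hnonneg
          (mul_nonneg (neg_nonneg.2 (min_le_right _ _)) measureReal_nonneg)]
        ring_nf

end EntropyFn

/-! ### The cost integral -/

section LipschitzRegularization

variable {Y : Type*} [PseudoEMetricSpace Y]

/-- The Lipschitz regularization of `f`: the largest `n`-Lipschitz function below `min f n`. -/
def lipReg (f : Y → ℝ≥0∞) (n : ℕ) (x : Y) : ℝ≥0∞ := ⨅ y, (min (f y) n + n * edist x y)

lemma lipReg_le (f : Y → ℝ≥0∞) (n : ℕ) (x : Y) : lipReg f n x ≤ min (f x) n :=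
  (iInf_le _ x).trans (by simp)

lemma monotone_lipReg (f : Y → ℝ≥0∞) : Monotone (lipReg f) := fun m n hmn x =>
  iInf_mono fun y => by gcongr

lemma continuous_lipReg (f : Y → ℝ≥0∞) (n : ℕ) : Continuous (lipReg f n) := by
  refine continuous_of_le_add_edist n (by simp) fun x z => ?_
  rw [lipReg, lipReg, ENNReal.iInf_add]
  refine iInf_mono fun y => ?_
  calc min (f y) n + n * edist x y ≤ min (f y) n + n * (edist x z + edist z y) := by
        gcongr
        exact edist_triangle x z y
    _ = min (f y) n + n * edist z y + n * edist x z := by ring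

lemma iSup_lipReg {f : Y → ℝ≥0∞} (hf : LowerSemicontinuous f) (x : Y) :
    ⨆ n, lipReg f n x = f x := by
  refine le_antisymm (iSup_le fun n => (lipReg_le f n x).trans (min_le_left _ _))
    (le_of_forall_lt fun a ha => ?_)
  obtain ⟨b, hab, hb⟩ := exists_between ha
  obtain ⟨δ, hδ, hball⟩ := EMetric.mem_nhds_iff.1 (hf x b hb)
  have hdiv : b / δ < ∞ := ENNReal.div_lt_top hb.ne_top hδ.ne'
  obtain ⟨n, hn⟩ := ENNReal.exists_nat_gt (max_lt hb.lt_top hdiv).ne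
  refine hab.trans_le (le_iSup_of_le n (le_iInf fun y => ?_))
  rcases lt_or_ge (edist y x) δ with hy | hy
  · exact (le_min (hball hy).le ((le_max_left _ _).trans hn.le)).trans le_self_add
  · calc b ≤ n * δ := ENNReal.div_le_iff_le_mul (.inl hδ.ne') (.inr (zero_le.trans_lt hn).ne') |>.1
          ((le_max_right _ _).trans hn.le)
      _ ≤ n * edist x y := by rw [edist_comm x y]; gcongr
      _ ≤ _ := le_add_self

end LipschitzRegularization

lemma exists_monotone_continuousMap_iSup_eq_of_lowerSemicontinuous {Y : Type*}
    [TopologicalSpace Y] [TopologicalSpace.PseudoMetrizableSpace Y] {f : Y → ℝ≥0∞}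
    (hf : LowerSemicontinuous f) :
    ∃ g : ℕ → C(Y, ℝ≥0), (∀ x, Monotone fun n => g n x) ∧ ∀ x, ⨆ n, (g n x : ℝ≥0∞) = f x := by
  let _ := TopologicalSpace.pseudoMetrizableSpacePseudoMetric Y
  have htop (n : ℕ) (x : Y) : lipReg f n x ≠ ∞ :=
    ((lipReg_le f n x).trans (min_le_right _ _)).trans_lt (ENNReal.natCast_lt_top n) |>.ne
  refine ⟨fun n => ⟨fun x => (lipReg f n x).toNNReal, ?_⟩, fun x m n hmn => ?_, fun x => ?_⟩
  · exact continuous_iff_continuousAt.2 fun x => (ENNReal.tendsto_toNNReal (htop n x)).comp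
      (continuous_lipReg f n).continuousAt
  · exact ENNReal.toNNReal_mono (htop n x) (monotone_lipReg f hmn x)
  · simpa [ENNReal.coe_toNNReal (htop _ x)] using iSup_lipReg hf x

lemma eIntegral_coe {α : Type*} [MeasurableSpace α] {μ : Measure α} {f : α → ℝ}
    (hf : Integrable f μ) :
    eIntegral μ (fun x => (f x : EReal)) = ((∫ x, f x ∂μ : ℝ) : EReal) := by
  rw [integral_eq_lintegral_pos_part_sub_lintegral_neg_part hf, EReal.coe_sub,
    EReal.coe_ennreal_toReal hf.lintegral_lt_top.ne,
    EReal.coe_ennreal_toReal (by simpa using hf.neg.lintegral_lt_top.ne)]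
  rfl

lemma eIntegral_mono {α : Type*} [MeasurableSpace α] {μ : Measure α} {f g : α → EReal}
    (hfg : f ≤ g) : eIntegral μ f ≤ eIntegral μ g :=
  EReal.sub_le_sub
    (EReal.coe_ennreal_le_coe_ennreal_iff.2
      (lintegral_mono fun x => EReal.toENNReal_le_toENNReal (hfg x)))
    (EReal.coe_ennreal_le_coe_ennreal_iff.2
      (lintegral_mono fun x => EReal.toENNReal_le_toENNReal (EReal.neg_le_neg_iff.2 (hfg x))))

lemma eIntegral_congr_ae {α : Type*} [MeasurableSpace α] {μ : Measure α} {f g : α → EReal}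
    (hfg : f =ᵐ[μ] g) : eIntegral μ f = eIntegral μ g := by
  have hpos : ∫⁻ x, posE (f x) ∂μ = ∫⁻ x, posE (g x) ∂μ := lintegral_congr_ae (hfg.fun_comp posE)
  have hneg : ∫⁻ x, posE (-f x) ∂μ = ∫⁻ x, posE (-g x) ∂μ :=
    lintegral_congr_ae (hfg.fun_comp fun a => posE (-a))
  rw [eIntegral, hpos, hneg, eIntegral]

lemma lowerSemicontinuous_toENNReal_sub_coe {Y : Type*} [TopologicalSpace Y] {f : Y → EReal}
    (hf : LowerSemicontinuous f) (K : ℝ) :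
    LowerSemicontinuous fun x => (f x - K).toENNReal := by
  have hcont : Continuous fun a : EReal => (a - K).toENNReal := by
    refine EReal.continuous_toENNReal.comp (continuous_iff_continuousAt.2 fun a => ?_)
    simp only [sub_eq_add_neg]
    exact (EReal.continuousAt_add (p := (a, -(K : EReal))) (.inr (by simp)) (.inr (by simp))).comp
      (f := fun a => (a, -(K : EReal))) (by fun_prop)
  exact hcont.comp_lowerSemicontinuous hf fun a b hab =>
    EReal.toENNReal_le_toENNReal (EReal.sub_le_sub hab le_rfl)

lemma lintegral_le_of_forall_continuousMap {Y : Type*} [TopologicalSpace Y]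
    [TopologicalSpace.PseudoMetrizableSpace Y] [MeasurableSpace Y] [OpensMeasurableSpace Y]
    {γ : Measure Y} {f : Y → ℝ≥0∞} (hf : LowerSemicontinuous f) {B : ℝ≥0∞}
    (hB : ∀ g : C(Y, ℝ≥0), (∀ x, (g x : ℝ≥0∞) ≤ f x) → ∫⁻ x, g x ∂γ ≤ B) :
    ∫⁻ x, f x ∂γ ≤ B := by
  obtain ⟨g, hmono, hg⟩ := exists_monotone_continuousMap_iSup_eq_of_lowerSemicontinuous hf
  simp_rw [← hg]
  rw [lintegral_iSup (fun n => (g n).continuous.measurable.coe_nnreal_ennreal)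
    fun m n hmn x => ENNReal.coe_le_coe.2 (hmono x hmn)]
  refine iSup_le fun n => hB (g n) fun x => ?_
  rw [← hg]
  exact le_iSup (fun n => (g n x : ℝ≥0∞)) n

lemma eIntegral_eq_of_lintegral_sub_ne_top {α : Type*} [MeasurableSpace α] {μ : Measure α}
    [IsFiniteMeasure μ] {f : α → EReal} {K : ℝ} (hK : ∀ x, (K : EReal) ≤ f x)
    (hf : AEMeasurable (fun x => (f x - K).toENNReal) μ)
    (hfin : ∫⁻ x, (f x - K).toENNReal ∂μ ≠ ∞) :
    eIntegral μ f =
      (((∫⁻ x, (f x - K).toENNReal ∂μ).toReal + K * μ.real univ : ℝ) : EReal) := by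
  have hlt := ae_lt_top' hf hfin
  have hreal : f =ᵐ[μ] fun x => (((f x - K).toENNReal.toReal + K : ℝ) : EReal) := by
    filter_upwards [hlt] with x hx
    rw [EReal.coe_add, EReal.coe_ennreal_toReal hx.ne,
      EReal.coe_toENNReal (EReal.sub_nonneg (by simp) (by simp) |>.2 (hK x)), EReal.sub_add_cancel]
  have hint := integrable_toReal_of_lintegral_ne_top hf hfin
  rw [eIntegral_congr_ae hreal,
    eIntegral_coe (f := fun x => (f x - K).toENNReal.toReal + K) (hint.add (integrable_const K)),
    integral_add hint (integrable_const K), integral_toReal hf hlt, integral_const, smul_eq_mul,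
    mul_comm]

lemma eIntegral_le_of_forall_continuousMap {Y : Type*} [TopologicalSpace Y] [CompactSpace Y]
    [TopologicalSpace.PseudoMetrizableSpace Y] [MeasurableSpace Y] [BorelSpace Y] {γ : Measure Y}
    [IsFiniteMeasure γ] {c : Y → EReal} (hc : LowerSemicontinuous c) {K : ℝ}
    (hK : ∀ x, (K : EReal) ≤ c x) {B : ℝ}
    (hB : ∀ g : C(Y, ℝ), (∀ x, (g x : EReal) ≤ c x) → ∫ x, g x ∂γ ≤ B) :
    eIntegral γ c ≤ B := by
  have hB0 : 0 ≤ B - K * γ.real univ := by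
    simpa [mul_comm] using hB (.const Y K) hK
  have hlsc := lowerSemicontinuous_toENNReal_sub_coe hc K
  have hlint : ∫⁻ x, (c x - K).toENNReal ∂γ ≤ ENNReal.ofReal (B - K * γ.real univ) := by
    refine lintegral_le_of_forall_continuousMap hlsc fun g hg => ?_
    have hle (x : Y) : ((g x + K : ℝ) : EReal) ≤ c x := by
      rw [EReal.coe_add]
      refine EReal.add_le_of_le_sub ?_
      rw [← EReal.coe_toENNReal (EReal.sub_nonneg (by simp) (by simp) |>.2 (hK x))]
      exact EReal.coe_ennreal_le_coe_ennreal_iff.2 (hg x)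
    have hint : Integrable (fun x => (g x : ℝ)) γ :=
      integrable_of_continuous_of_compactSpace (by fun_prop) γ
    have hgB : ∫ x, ((g x : ℝ) + K) ∂γ ≤ B := hB ⟨fun x => g x + K, by fun_prop⟩ hle
    rw [integral_add hint (integrable_const K), integral_const, smul_eq_mul] at hgB
    rw [lintegral_coe_eq_integral _ hint]
    exact ENNReal.ofReal_le_ofReal (by linarith)
  rw [eIntegral_eq_of_lintegral_sub_ne_top hK hlsc.measurable.aemeasurable
    (ne_top_of_le_ne_top ENNReal.ofReal_ne_top hlint), EReal.coe_le_coe_iff]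
  linarith [ENNReal.toReal_le_of_le_ofReal hB0 hlint]

/-! ### Lagrange multipliers for constraints in `C(K, ℝ)` -/

lemma exists_continuousLinearMap_forall_lt_add {W : Type*} [TopologicalSpace W] [AddCommGroup W]
    [Module ℝ W] [IsTopologicalAddGroup W] [ContinuousSMul ℝ W] {S : Set (W × ℝ)}
    (hconv : Convex ℝ S) (hopen : IsOpen S) {D t₀ : ℝ} (hD : (0, D) ∉ S) (h₀ : (0, t₀) ∈ S)
    (ht : t₀ < D) : ∃ f : W →L[ℝ] ℝ, ∀ p ∈ S, p.2 < D + f p.1 := by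
  obtain ⟨g, hg⟩ := geometric_hahn_banach_open_point hconv hopen hD
  have hsplit (w : W) (t : ℝ) : g (w, t) = g (w, 0) + t * g (0, 1) := by
    rw [← smul_eq_mul, ← map_smul, ← map_add]
    simp
  have hpos : 0 < g (0, 1) := by
    have h := hg _ h₀
    rw [hsplit 0 t₀, hsplit 0 D, add_lt_add_iff_left] at h
    nlinarith
  refine ⟨-(g (0, 1))⁻¹ • g.comp (.inl ℝ W ℝ), fun p hp => ?_⟩
  have h := hg p hp
  rw [← Prod.mk.eta (p := p), hsplit, hsplit 0 D, Prod.mk_zero_zero, map_zero, zero_add] at h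
  have hlt : p.2 < (D * g (0, 1) - g (p.1, 0)) / g (0, 1) := by
    rw [lt_div_iff₀ hpos]
    linarith
  calc p.2 < (D * g (0, 1) - g (p.1, 0)) / g (0, 1) := hlt
    _ = D + (-(g (0, 1))⁻¹ • g.comp (.inl ℝ W ℝ)) p.1 := by
      simp [sub_div, hpos.ne']
      ring

section Multiplier

variable {K : Type*} [TopologicalSpace K]

lemma exists_measure_eq_integral_of_nonneg [CompactSpace K] [T2Space K]
    [MeasurableSpace K] [BorelSpace K] (L : C(K, ℝ) →ₗ[ℝ] ℝ)
    (hL : ∀ u, 0 ≤ u → 0 ≤ L u) :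
    ∃ γ : Measure K, IsFiniteMeasure γ ∧ ∀ u, L u = ∫ z, u z ∂γ := by
  let Λ : CompactlySupportedContinuousMap K ℝ →ₗ[ℝ] ℝ :=
    { toFun := fun f => L f
      map_add' := fun f g => map_add L (f : C(K, ℝ)) g
      map_smul' := fun a f => map_smul L a (f : C(K, ℝ)) }
  let Λpos : CompactlySupportedContinuousMap K ℝ →ₚ[ℝ] ℝ := .mk₀ Λ fun f hf => hL _ hf
  exact ⟨RealRMK.rieszMeasure Λpos, inferInstance, fun u => (RealRMK.integral_rieszMeasure Λpos
    (CompactlySupportedContinuousMap.continuousMapEquiv u)).symm⟩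

variable {E : Type*} {P : Set E} {A : E → C(K, ℝ)} {J : E → ℝ}

/-- The strictly attainable pairs (constraint level, value) of the concave program of maximizing
`J` over `P` subject to `A p ≤ 0`. -/
def attainable (P : Set E) (A : E → C(K, ℝ)) (J : E → ℝ) : Set (C(K, ℝ) × ℝ) :=
  {q | ∃ p ∈ P, (∀ z, A p z < q.1 z) ∧ q.2 < J p}

lemma isOpen_attainable [CompactSpace K] (P : Set E) (A : E → C(K, ℝ)) (J : E → ℝ) :
    IsOpen (attainable P A J) := by
  have heq : attainable P A J =
      ⋃ p ∈ P, {w : C(K, ℝ) | MapsTo ⇑(w - A p) univ (Ioi 0)} ×ˢ Iio (J p) := by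
    ext q
    simp only [attainable, MapsTo, mem_ofPred_eq, mem_iUnion, mem_prod, mem_univ, true_imp_iff,
      ContinuousMap.sub_apply, mem_Ioi, sub_pos, mem_Iio, exists_prop]
  rw [heq]
  exact isOpen_biUnion fun p _ => IsOpen.prod
    ((ContinuousMap.isOpen_setOfPred_mapsTo isCompact_univ isOpen_Ioi).preimage
      (continuous_id.sub continuous_const)) isOpen_Iio

variable [AddCommGroup E] [Module ℝ E]

lemma convex_attainable (hA : ConvexOn ℝ P A) (hJ : ConcaveOn ℝ P J) :
    Convex ℝ (attainable P A J) := by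
  rintro ⟨w, t⟩ ⟨p, hp, hpw, hpt⟩ ⟨w', t'⟩ ⟨p', hp', hpw', hpt'⟩ a b ha hb hab
  have hlt {x x' y y' : ℝ} (h : x < y) (h' : x' < y') : a * x + b * x' < a * y + b * y' := by
    have := convex_Ioi (0 : ℝ) (sub_pos.2 h) (sub_pos.2 h') ha hb hab
    simp only [smul_eq_mul, mem_Ioi] at this
    linarith
  exact ⟨a • p + b • p', hA.1 hp hp' ha hb hab,
    fun z => (hA.2 hp hp' ha hb hab z).trans_lt (hlt (hpw z) (hpw' z)),
    (hlt hpt hpt').trans_le (hJ.2 hp hp' ha hb hab)⟩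

theorem exists_measure_forall_le_add_integral [CompactSpace K] [T2Space K]
    [MeasurableSpace K] [BorelSpace K]
    (hA : ConvexOn ℝ P A) (hJ : ConcaveOn ℝ P J) {D : ℝ} (hD : ∀ p ∈ P, A p ≤ 0 → J p ≤ D)
    (hSlater : ∃ p ∈ P, ∀ z, A p z < 0) :
    ∃ γ : Measure K, IsFiniteMeasure γ ∧ ∀ p ∈ P, J p ≤ D + ∫ z, A p z ∂γ := by
  obtain ⟨p₀, hp₀, hA₀⟩ := hSlater
  have hDnot : (0, D) ∉ attainable P A J := fun ⟨p, hp, hAp, hDp⟩ =>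
    (hD p hp fun z => (hAp z).le).not_gt hDp
  obtain ⟨f, hf⟩ := exists_continuousLinearMap_forall_lt_add (convex_attainable hA hJ)
    (isOpen_attainable P A J) hDnot (t₀ := J p₀ - 1) ⟨p₀, hp₀, hA₀, sub_one_lt _⟩
    ((sub_one_lt _).trans_le (hD p₀ hp₀ fun z => (hA₀ z).le))
  have hnonneg (u : C(K, ℝ)) (hu : 0 ≤ u) : 0 ≤ f u := by
    by_contra! hneg
    obtain ⟨n, hn⟩ := exists_nat_gt ((D - (J p₀ - 1)) / -f u)
    have hmem : ((n : ℝ) • u, J p₀ - 1) ∈ attainable P A J :=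
      ⟨p₀, hp₀, fun z => (hA₀ z).trans_le (mul_nonneg n.cast_nonneg (hu z)), sub_one_lt _⟩
    have hlt := hf _ hmem
    rw [div_lt_iff₀ (neg_pos.2 hneg)] at hn
    simp only [map_smul, smul_eq_mul] at hlt
    linarith
  obtain ⟨γ, hγ, hfγ⟩ := exists_measure_eq_integral_of_nonneg f.toLinearMap hnonneg
  refine ⟨γ, hγ, fun p hp => ?_⟩
  have hlt (ε : ℝ) (hε : 0 < ε) : J p - ε ≤ D + f (A p + ε • 1) :=
    (hf (A p + ε • 1, J p - ε) ⟨p, hp, fun z => by simpa using hε, sub_lt_self _ hε⟩).le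
  have hlim : Tendsto (fun ε : ℝ => D + f (A p + ε • 1)) (𝓝[>] 0)
      (𝓝 (D + f (A p + (0 : ℝ) • 1))) :=
    Continuous.tendsto' (by fun_prop) _ _ rfl |>.mono_left nhdsWithin_le_nhds
  have hlim' : Tendsto (fun ε : ℝ => J p - ε) (𝓝[>] 0) (𝓝 (J p - 0)) :=
    Continuous.tendsto' (by fun_prop) _ _ rfl |>.mono_left nhdsWithin_le_nhds
  have hle := le_of_tendsto_of_tendsto hlim' hlim (eventually_mem_nhdsWithin.mono hlt)
  rw [sub_zero, zero_smul, add_zero] at hle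
  exact hle.trans_eq (congrArg _ (hfγ _))

end Multiplier

/-! ### Entropy transport under linear constraints -/

lemma convex_setOf_forall_coe_le {K : Type*} [TopologicalSpace K] (c : K → EReal) :
    Convex ℝ {g : C(K, ℝ) | ∀ q, (g q : EReal) ≤ c q} := by
  intro g hg g' hg' a b ha hb hab q
  have hmax : ((max (g q) (g' q) : ℝ) : EReal) ≤ c q := by
    rcases max_choice (g q) (g' q) with h | h <;> rw [h]
    exacts [hg q, hg' q]
  exact (EReal.coe_le_coe_iff.2 (Convex.combo_le_max _ _ ha hb hab)).trans hmax

section LinearConstraint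

variable {Y Z : Type*}

/-- The entropy-transport functional `ℱ₁(γ₁|μ₁) + ℱ₂(γ₂|μ₂) + ∫ c dγ`. -/
def etCost [MeasurableSpace Y] [MeasurableSpace Z] (F₁ F₂ : EntropyFn) (μ₁ : Measure Y)
    (μ₂ : Measure Z) (c : Y × Z → EReal) (γ : Measure (Y × Z)) : EReal :=
  ((entF F₁ γ.fst μ₁ : ℝ≥0∞) : EReal) + ((entF F₂ γ.snd μ₂ : ℝ≥0∞) : EReal) + eIntegral γ c

variable [TopologicalSpace Y] [TopologicalSpace Z]

/-- The dual feasible pairs for transport plans that annihilate the space `V` of test functions: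
the constraint `φ₁ ⊕ φ₂ ≤ c` is relaxed by an element of `V`. -/
def dualFeasible (F₁ F₂ : EntropyFn) (V : Submodule ℝ C(Y × Z, ℝ)) (c : Y × Z → EReal) :
    Set (C(Y, ℝ) × C(Z, ℝ)) :=
  {φ | φ.1 ∈ F₁.dualVars Y ∧ φ.2 ∈ F₂.dualVars Z ∧
    ∃ v ∈ V, ∀ q, ((φ.1 q.1 + φ.2 q.2 + v q : ℝ) : EReal) ≤ c q}

variable [CompactSpace Y] [CompactSpace Z] [MeasurableSpace Y] [MeasurableSpace Z] [BorelSpace Y]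
  [BorelSpace Z]
  {F₁ F₂ : EntropyFn} {V : Submodule ℝ C(Y × Z, ℝ)} {c : Y × Z → EReal} {μ₁ : Measure Y}
  {μ₂ : Measure Z} [IsFiniteMeasure μ₁] [IsFiniteMeasure μ₂] {γ : Measure (Y × Z)}
  [IsFiniteMeasure γ]

section WeakDuality

variable [SecondCountableTopologyEither Y Z]

lemma integral_fst_add_snd_add (φ₁ : C(Y, ℝ)) (φ₂ : C(Z, ℝ)) (v : C(Y × Z, ℝ)) :
    ∫ q, (φ₁ q.1 + φ₂ q.2 + v q) ∂γ = ∫ x, φ₁ x ∂γ.fst + ∫ y, φ₂ y ∂γ.snd + ∫ q, v q ∂γ := by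
  have hint {u : Y × Z → ℝ} (hu : Continuous u) : Integrable u γ :=
    integrable_of_continuous_of_compactSpace hu γ
  rw [integral_add (hint (by fun_prop)) (hint v.continuous),
    integral_add (hint (by fun_prop)) (hint (by fun_prop)), Measure.fst, Measure.snd,
    integral_map measurable_fst.aemeasurable φ₁.continuous.aestronglyMeasurable,
    integral_map measurable_snd.aemeasurable φ₂.continuous.aestronglyMeasurable]

theorem coe_dualInt_add_dualInt_le_etCost {φ : C(Y, ℝ) × C(Z, ℝ)}
    (hφ : φ ∈ dualFeasible F₁ F₂ V c) (hγ : ∀ v ∈ V, ∫ q, v q ∂γ = 0) :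
    ((F₁.dualInt μ₁ φ.1 + F₂.dualInt μ₂ φ.2 : ℝ) : EReal) ≤ etCost F₁ F₂ μ₁ μ₂ c γ := by
  obtain ⟨hφ₁, hφ₂, v, hv, hle⟩ := hφ
  have hcoe {r : ℝ} {a : ℝ≥0∞} (h : ENNReal.ofReal r ≤ a) : (r : EReal) ≤ a := by
    refine le_trans ?_ (EReal.coe_ennreal_le_coe_ennreal_iff.2 h)
    rw [EReal.coe_ennreal_ofReal]
    exact EReal.coe_le_coe_iff.2 (le_max_left _ _)
  have hcost : ((∫ x, φ.1 x ∂γ.fst + ∫ y, φ.2 y ∂γ.snd : ℝ) : EReal) ≤ eIntegral γ c := by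
    rw [← add_zero (_ + _), ← hγ v hv, ← integral_fst_add_snd_add, ← eIntegral_coe
      (integrable_of_continuous_of_compactSpace (by fun_prop) γ)]
    exact eIntegral_mono hle
  calc ((F₁.dualInt μ₁ φ.1 + F₂.dualInt μ₂ φ.2 : ℝ) : EReal)
      = ((F₁.dualInt μ₁ φ.1 - ∫ x, φ.1 x ∂γ.fst : ℝ) : EReal) +
          ((F₂.dualInt μ₂ φ.2 - ∫ y, φ.2 y ∂γ.snd : ℝ) : EReal) +
          ((∫ x, φ.1 x ∂γ.fst + ∫ y, φ.2 y ∂γ.snd : ℝ) : EReal) := by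
        rw [← EReal.coe_add, ← EReal.coe_add]
        congr 1
        ring
    _ ≤ etCost F₁ F₂ μ₁ μ₂ c γ :=
        add_le_add (add_le_add (hcoe (EntropyFn.ofReal_dualInt_sub_le_entF hφ₁ γ.fst μ₁))
          (hcoe (EntropyFn.ofReal_dualInt_sub_le_entF hφ₂ γ.snd μ₂))) hcost

end WeakDuality

variable [T2Space Y] [T2Space Z] [SecondCountableTopology Y] [SecondCountableTopology Z]

lemma etCost_le_of_forall_dualVars (hc : LowerSemicontinuous c) {K : ℝ}
    (hK : ∀ q, (K : EReal) ≤ c q) {D : ℝ}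
    (hD : ∀ φ₁ ∈ F₁.dualVars Y, ∀ φ₂ ∈ F₂.dualVars Z, ∀ g : C(Y × Z, ℝ),
      (∀ q, (g q : EReal) ≤ c q) → (F₁.dualInt μ₁ φ₁ - ∫ x, φ₁ x ∂γ.fst) +
        (F₂.dualInt μ₂ φ₂ - ∫ y, φ₂ y ∂γ.snd) + ∫ q, g q ∂γ ≤ D) :
    etCost F₁ F₂ μ₁ μ₂ c γ ≤ D := by
  have hreal {a : ℝ≥0∞} {r : ℝ} (h : (a : EReal) ≤ r) : ∃ e : ℝ, (a : EReal) = e :=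
    ⟨a.toReal, (EReal.coe_ennreal_toReal fun ha => by simp [ha] at h).symm⟩
  have h₁ (φ₂) (hφ₂ : φ₂ ∈ F₂.dualVars Z) (g : C(Y × Z, ℝ)) (hg : ∀ q, (g q : EReal) ≤ c q) :
      ((entF F₁ γ.fst μ₁ : ℝ≥0∞) : EReal) ≤
        (D - (F₂.dualInt μ₂ φ₂ - ∫ y, φ₂ y ∂γ.snd) - ∫ q, g q ∂γ : ℝ) :=
    EntropyFn.coe_entF_le_of_forall_dualVars fun φ₁ hφ₁ => by linarith [hD φ₁ hφ₁ φ₂ hφ₂ g hg]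
  obtain ⟨e₁, he₁⟩ := hreal (h₁ _ F₂.const_one_mem_dualVars (.const _ K) hK)
  rw [he₁] at h₁
  have h₂ (g : C(Y × Z, ℝ)) (hg : ∀ q, (g q : EReal) ≤ c q) :
      ((entF F₂ γ.snd μ₂ : ℝ≥0∞) : EReal) ≤ (D - e₁ - ∫ q, g q ∂γ : ℝ) :=
    EntropyFn.coe_entF_le_of_forall_dualVars fun φ₂ hφ₂ => by
      linarith [EReal.coe_le_coe_iff.1 (h₁ φ₂ hφ₂ g hg)]
  obtain ⟨e₂, he₂⟩ := hreal (h₂ (.const _ K) hK)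
  rw [he₂] at h₂
  have h₃ : eIntegral γ c ≤ (D - e₁ - e₂ : ℝ) :=
    eIntegral_le_of_forall_continuousMap hc hK fun g hg => by
      linarith [EReal.coe_le_coe_iff.1 (h₂ g hg)]
  calc etCost F₁ F₂ μ₁ μ₂ c γ = e₁ + e₂ + eIntegral γ c := by rw [etCost, he₁, he₂]
    _ ≤ e₁ + e₂ + (D - e₁ - e₂ : ℝ) := by gcongr
    _ = D := by
      rw [← EReal.coe_add, ← EReal.coe_add]
      congr 1
      ring

lemma exists_measure_forall_dualInt_sub_le {K : ℝ} (hK : ∀ q, (K : EReal) ≤ c q)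
    (hrec : 0 < ((F₁.recC + F₂.recC : ℝ≥0∞) : EReal) + K) {D : ℝ}
    (hD : ∀ φ ∈ dualFeasible F₁ F₂ V c, F₁.dualInt μ₁ φ.1 + F₂.dualInt μ₂ φ.2 ≤ D) :
    ∃ γ : Measure (Y × Z), IsFiniteMeasure γ ∧ ∀ φ₁ ∈ F₁.dualVars Y, ∀ φ₂ ∈ F₂.dualVars Z,
      ∀ v ∈ V, ∀ g : C(Y × Z, ℝ), (∀ q, (g q : EReal) ≤ c q) →
      (F₁.dualInt μ₁ φ₁ - ∫ x, φ₁ x ∂γ.fst) + (F₂.dualInt μ₂ φ₂ - ∫ y, φ₂ y ∂γ.snd) +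
        ∫ q, g q ∂γ ≤ D + ∫ q, v q ∂γ := by
  let P : Set (C(Y, ℝ) × C(Z, ℝ) × C(Y × Z, ℝ) × C(Y × Z, ℝ)) :=
    F₁.dualVars Y ×ˢ F₂.dualVars Z ×ˢ (V : Set C(Y × Z, ℝ)) ×ˢ {g | ∀ q, (g q : EReal) ≤ c q}
  have hF₁ := F₁.concaveOn_dualInt μ₁ (Y := Y)
  have hF₂ := F₂.concaveOn_dualInt μ₂ (Y := Z)
  have hP : Convex ℝ P := hF₁.1.prod (hF₂.1.prod (V.convex.prod (convex_setOf_forall_coe_le c)))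
  have hA : ConvexOn ℝ P fun p => p.1.comp .fst + p.2.1.comp .snd + (p.2.2.1 - p.2.2.2) :=
    ⟨hP, fun p _ p' _ a b _ _ _ => le_of_eq <| by
      ext q
      simp
      ring⟩
  have hJ : ConcaveOn ℝ P fun p => F₁.dualInt μ₁ p.1 + F₂.dualInt μ₂ p.2.1 := by
    refine ⟨hP, fun p hp p' hp' a b ha hb hab => ?_⟩
    have h₁ := hF₁.2 hp.1 hp'.1 ha hb hab
    have h₂ := hF₂.2 hp.2.1 hp'.2.1 ha hb hab
    simp only [smul_eq_mul, Prod.fst_add, Prod.smul_fst, Prod.snd_add, Prod.smul_snd] at h₁ h₂ ⊢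
    linarith
  obtain ⟨t₁, ht₁, t₂, ht₂, htK⟩ := EntropyFn.exists_mem_interior_circDom_add_lt F₁ F₂ hrec
  obtain ⟨γ, hγ, hle⟩ := exists_measure_forall_le_add_integral hA hJ (D := D)
    (fun p ⟨hp₁, hp₂, hv, hg⟩ hp => hD (p.1, p.2.1) ⟨hp₁, hp₂, p.2.2.1, hv, fun q =>
      (EReal.coe_le_coe_iff.2 (by simpa [← add_sub_assoc] using hp q)).trans (hg q)⟩)
    ⟨(.const Y t₁, .const Z t₂, 0, .const _ K), ⟨fun _ => ht₁, fun _ => ht₂, V.zero_mem, hK⟩,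
      fun q => by simpa using htK⟩
  refine ⟨γ, hγ, fun φ₁ hφ₁ φ₂ hφ₂ v hv g hg => ?_⟩
  have hJ : F₁.dualInt μ₁ φ₁ + F₂.dualInt μ₂ φ₂ ≤
      D + ∫ q, (φ₁ q.1 + φ₂ q.2 + (v - g) q) ∂γ := hle (φ₁, φ₂, v, g) ⟨hφ₁, hφ₂, hv, hg⟩
  have hvg : ∫ q, (v - g) q ∂γ = ∫ q, v q ∂γ - ∫ q, g q ∂γ :=
    integral_sub (integrable_of_continuous_of_compactSpace v.continuous γ)
      (integrable_of_continuous_of_compactSpace g.continuous γ)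
  rw [integral_fst_add_snd_add, hvg] at hJ
  linarith

theorem exists_measure_etCost_le (hc : LowerSemicontinuous c) {K : ℝ}
    (hK : ∀ q, (K : EReal) ≤ c q) (hrec : 0 < ((F₁.recC + F₂.recC : ℝ≥0∞) : EReal) + K) {D : ℝ}
    (hD : ∀ φ ∈ dualFeasible F₁ F₂ V c, F₁.dualInt μ₁ φ.1 + F₂.dualInt μ₂ φ.2 ≤ D) :
    ∃ γ : Measure (Y × Z), IsFiniteMeasure γ ∧ (∀ v ∈ V, ∫ q, v q ∂γ = 0) ∧
      etCost F₁ F₂ μ₁ μ₂ c γ ≤ D := by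
  obtain ⟨γ, hγ, hle⟩ := exists_measure_forall_dualInt_sub_le hK hrec hD
  refine ⟨γ, hγ, fun v hv => ?_, etCost_le_of_forall_dualVars hc hK fun φ₁ hφ₁ φ₂ hφ₂ g hg => by
    simpa using hle φ₁ hφ₁ φ₂ hφ₂ 0 V.zero_mem g hg⟩
  obtain ⟨C, hC⟩ : ∃ C, ∀ t : ℝ, C ≤ D + t * ∫ q, v q ∂γ :=
    ⟨_, fun t => (hle _ F₁.const_one_mem_dualVars _ F₂.const_one_mem_dualVars (t • v)
      (V.smul_mem t hv) (.const _ K) hK).trans_eq (by simp [integral_const_mul])⟩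
  by_contra hne
  have := hC ((C - D - 1) / ∫ q, v q ∂γ)
  rw [div_mul_cancel₀ _ hne] at this
  linarith

theorem sInf_etCost_eq_sSup_dualInt (μ₁ : Measure Y) (μ₂ : Measure Z) [IsFiniteMeasure μ₁]
    [IsFiniteMeasure μ₂] (hc : LowerSemicontinuous c) {K : ℝ} (hK : ∀ q, (K : EReal) ≤ c q)
    (hrec : 0 < ((F₁.recC + F₂.recC : ℝ≥0∞) : EReal) + K) :
    sInf {e | ∃ γ : Measure (Y × Z), IsFiniteMeasure γ ∧ (∀ v ∈ V, ∫ q, v q ∂γ = 0) ∧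
        e = etCost F₁ F₂ μ₁ μ₂ c γ} =
      sSup {e | ∃ φ ∈ dualFeasible F₁ F₂ V c,
        e = ((F₁.dualInt μ₁ φ.1 + F₂.dualInt μ₂ φ.2 : ℝ) : EReal)} := by
  apply le_antisymm
  · refine EReal.le_of_forall_lt_iff_le.1 fun D hD => ?_
    obtain ⟨γ, hγ, hV, hle⟩ := exists_measure_etCost_le hc hK hrec fun φ hφ =>
      EReal.coe_le_coe_iff.1 (hD.le.trans' (le_sSup ⟨φ, hφ, rfl⟩))
    exact hle.trans' (sInf_le ⟨γ, hγ, hV, rfl⟩)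
  · refine sSup_le ?_
    rintro _ ⟨φ, hφ, rfl⟩
    refine le_sInf ?_
    rintro _ ⟨γ, hγ, hV, rfl⟩
    exact coe_dualInt_add_dualInt_le_etCost hφ hV

end LinearConstraint

/-! ### The martingale constraint -/

lemma ae_eq_zero_of_forall_integral_mul_eq_zero {Y : Type*} [TopologicalSpace Y]
    [HasOuterApproxClosed Y] [MeasurableSpace Y] [BorelSpace Y] {μ : Measure Y} {g : Y → ℝ}
    (hg : Integrable g μ) (hint : ∀ h : Y →ᵇ ℝ, ∫ x, h x * g x ∂μ = 0) : g =ᵐ[μ] 0 := by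
  have hgn : Integrable (fun x => -g x) μ := hg.neg
  have := isFiniteMeasure_withDensity_ofReal hg.2
  have := isFiniteMeasure_withDensity_ofReal hgn.2
  have hmeas {f : Y → ℝ} (hf : Integrable f μ) : AEMeasurable (fun x => ENNReal.ofReal (f x)) μ :=
    hf.aestronglyMeasurable.aemeasurable.ennreal_ofReal
  have hpos {f : Y → ℝ} (hf : Integrable f μ) (h : Y →ᵇ ℝ) :
      Integrable (fun x => max (f x) 0 * h x) μ :=
    hf.pos_part.mul_bdd h.continuous.aestronglyMeasurable (.of_forall h.norm_coe_le_norm)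
  have hparts : μ.withDensity (fun x => ENNReal.ofReal (g x)) =
      μ.withDensity fun x => ENNReal.ofReal (-g x) := by
    refine ext_of_forall_integral_eq_of_IsFiniteMeasure fun h => ?_
    rw [integral_withDensity_eq_integral_toReal_smul₀ (hmeas hg) (by simp),
      integral_withDensity_eq_integral_toReal_smul₀ (hmeas hgn) (by simp), ← sub_eq_zero]
    simp only [ENNReal.toReal_ofReal', smul_eq_mul]
    rw [← integral_sub (hpos hg h) (hpos hgn h)]
    refine (integral_congr_ae (.of_forall fun x => ?_)).trans (hint h)
    linear_combination h x * max_zero_sub_max_neg_zero_eq_self (g x)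
  filter_upwards [(withDensity_eq_iff (hmeas hg) (hmeas hgn) hg.lintegral_lt_top.ne).1 hparts]
    with x hx
  have hmax := congrArg ENNReal.toReal hx
  simp only [ENNReal.toReal_ofReal'] at hmax
  exact (max_zero_sub_max_neg_zero_eq_self (g x)).symm.trans (sub_eq_zero.2 hmax)

lemma EntropyFn.eIntegral_circ_comp {Y : Type*} [TopologicalSpace Y] [CompactSpace Y]
    [MeasurableSpace Y] [BorelSpace Y] {F : EntropyFn} {φ : C(Y, ℝ)} (hφ : φ ∈ F.dualVars Y)
    {μ : Measure Y} [IsFiniteMeasure μ] :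
    eIntegral μ (fun x => F.circ (φ x)) = F.dualInt μ φ := by
  simp only [← coe_circReal (interior_subset (hφ _))]
  exact eIntegral_coe (integrable_circReal_comp hφ μ)

section Martingale

variable {X : Set ℝ}

variable (X) in
/-- The test functions `(x, y) ↦ h(x)(y - x)`, `h ∈ C(X)`, of the martingale property. -/
def martingaleTests : Submodule ℝ C(↥X × ↥X, ℝ) where
  carrier := {v | ∃ h : C(↥X, ℝ), ∀ q, v q = h q.1 * ((q.2 : ℝ) - q.1)}
  add_mem' := by
    rintro v v' ⟨h, hv⟩ ⟨h', hv'⟩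
    exact ⟨h + h', fun q => by simp [hv, hv', add_mul]⟩
  zero_mem' := ⟨0, by simp⟩
  smul_mem' := by
    rintro t v ⟨h, hv⟩
    exact ⟨t • h, fun q => by simp [hv, mul_assoc]⟩

variable [CompactSpace ↥X]

lemma mem_lamM_iff_mem_dualFeasible {c : ↥X → ↥X → EReal} {F₁ F₂ : EntropyFn}
    {φ : (↥X →ᵇ ℝ) × (↥X →ᵇ ℝ)} :
    φ ∈ lamM c F₁ F₂ ↔ (φ.1.toContinuousMap, φ.2.toContinuousMap) ∈
      dualFeasible F₁ F₂ (martingaleTests X) fun q => c q.1 q.2 := by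
  refine and_congr_right' (and_congr_right' ⟨?_, ?_⟩)
  · rintro ⟨h, hc⟩
    exact ⟨⟨fun q => h q.1 * ((q.2 : ℝ) - q.1), by fun_prop⟩, ⟨h.toContinuousMap, fun _ => rfl⟩,
      fun q => hc q.1 q.2⟩
  · rintro ⟨v, ⟨h, hv⟩, hc⟩
    exact ⟨.mkOfCompact h, fun x y => by simpa [hv] using hc (x, y)⟩

lemma sSup_lamM_eq_sSup_dualInt (c : ↥X → ↥X → EReal) (F₁ F₂ : EntropyFn) (μ₁ μ₂ : Measure ↥X)
    [IsFiniteMeasure μ₁] [IsFiniteMeasure μ₂] :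
    sSup {e | ∃ φ ∈ lamM c F₁ F₂, e = eIntegral μ₁ (fun x => F₁.circ (φ.1 x)) +
        eIntegral μ₂ (fun x => F₂.circ (φ.2 x))} =
      sSup {e | ∃ φ ∈ dualFeasible F₁ F₂ (martingaleTests X) fun q => c q.1 q.2,
        e = ((F₁.dualInt μ₁ φ.1 + F₂.dualInt μ₂ φ.2 : ℝ) : EReal)} := by
  let toCont : (↥X →ᵇ ℝ) × (↥X →ᵇ ℝ) ≃ C(↥X, ℝ) × C(↥X, ℝ) :=
    .prodCongr (ContinuousMap.equivBoundedOfCompact _ _).symm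
      (ContinuousMap.equivBoundedOfCompact _ _).symm
  refine congrArg sSup (Set.ext fun e => toCont.exists_congr fun φ => ?_)
  rw [mem_lamM_iff_mem_dualFeasible]
  refine and_congr_right fun hφ => ?_
  have h₁ : eIntegral μ₁ (fun x => F₁.circ (φ.1 x)) = F₁.dualInt μ₁ (toCont φ).1 :=
    EntropyFn.eIntegral_circ_comp hφ.1
  have h₂ : eIntegral μ₂ (fun x => F₂.circ (φ.2 x)) = F₂.dualInt μ₂ (toCont φ).2 :=
    EntropyFn.eIntegral_circ_comp hφ.2.1
  rw [h₁, h₂, EReal.coe_add]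

variable [StandardBorelSpace ↥X] [Nonempty ↥X]

lemma integral_mul_sub_eq_integral_condKernel (γ : Measure (↥X × ↥X)) [IsFiniteMeasure γ]
    (h : C(↥X, ℝ)) :
    ∫ q, h q.1 * ((q.2 : ℝ) - q.1) ∂γ =
      ∫ x, h x * (∫ y, (y : ℝ) ∂γ.condKernel x - x) ∂γ.fst := by
  rw [← Measure.integral_condKernel
    (integrable_of_continuous_of_compactSpace (by fun_prop) γ)]
  refine integral_congr_ae (.of_forall fun x => ?_)
  dsimp only
  rw [integral_const_mul, integral_sub (integrable_of_continuous_of_compactSpace (by fun_prop) _)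
    (integrable_const _)]
  simp

lemma martCond_iff_forall_martingaleTests (γ : Measure (↥X × ↥X)) [hγ : IsFiniteMeasure γ] :
    martCond γ hγ ↔ ∀ v ∈ martingaleTests X, ∫ q, v q ∂γ = 0 := by
  constructor
  · rintro hm v ⟨h, hv⟩
    simp only [hv, integral_mul_sub_eq_integral_condKernel]
    exact integral_eq_zero_of_ae (hm.mono fun x hx => by simp [hx])
  · intro H
    have hbar : Integrable (fun x => ∫ y, (y : ℝ) ∂γ.condKernel x - x) γ.fst :=
      (integrable_of_continuous_of_compactSpace (f := fun q : ↥X × ↥X => (q.2 : ℝ))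
        (by fun_prop) γ).integral_condKernel.sub
        (integrable_of_continuous_of_compactSpace (by fun_prop) _)
    have hzero := ae_eq_zero_of_forall_integral_mul_eq_zero hbar fun h =>
      (integral_mul_sub_eq_integral_condKernel γ h.toContinuousMap).symm.trans
        (H ⟨fun q => h q.1 * ((q.2 : ℝ) - q.1), by fun_prop⟩ ⟨h.toContinuousMap, fun _ => rfl⟩)
    exact hzero.mono fun x => sub_eq_zero.1

lemma eMart_eq_sInf_etCost (c : ↥X → ↥X → EReal) (F₁ F₂ : EntropyFn) (μ₁ μ₂ : Measure ↥X) :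
    eMart c F₁ F₂ μ₁ μ₂ = sInf {e | ∃ γ : Measure (↥X × ↥X), IsFiniteMeasure γ ∧
      (∀ v ∈ martingaleTests X, ∫ q, v q ∂γ = 0) ∧
      e = etCost F₁ F₂ μ₁ μ₂ (fun q => c q.1 q.2) γ} := by
  refine congrArg sInf (Set.ext fun e => exists_congr fun γ => ?_)
  rw [← exists_prop]
  exact exists_congr fun hγ => and_congr_left' (martCond_iff_forall_martingaleTests γ)

end Martingale

theorem stmt17_general (X : Set ℝ) (hXc : IsCompact X) (hXne : X.Nonempty)
    (c : ↥X → ↥X → EReal)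
    (hlsc : LowerSemicontinuous fun q : ↥X × ↥X => c q.1 q.2)
    {K : ℝ} (hK : ∀ x y, (K : EReal) ≤ c x y)
    (F₁ F₂ : EntropyFn) (hrec : 0 < ((F₁.recC + F₂.recC : ℝ≥0∞) : EReal) + K)
    (μ₁ μ₂ : Measure ↥X) [IsFiniteMeasure μ₁] [IsFiniteMeasure μ₂] :
    haveI : Nonempty ↥X := hXne.to_subtype
    haveI : PolishSpace ↥X := hXc.isClosed.polishSpace
    eMart c F₁ F₂ μ₁ μ₂
      = sSup { e : EReal | ∃ φ ∈ lamM c F₁ F₂,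
          e = eIntegral μ₁ (fun x => F₁.circ (φ.1 x)) +
              eIntegral μ₂ (fun x => F₂.circ (φ.2 x)) } := by
  have : Nonempty ↥X := hXne.to_subtype
  have : PolishSpace ↥X := hXc.isClosed.polishSpace
  have : CompactSpace ↥X := isCompact_iff_compactSpace.1 hXc
  rw [eMart_eq_sInf_etCost, sSup_lamM_eq_sSup_dualInt]
  exact sInf_etCost_eq_sSup_dualInt μ₁ μ₂ hlsc (fun q => hK q.1 q.2) hrec

theorem stmt17 (X : Set ℝ) (hXc : IsCompact X) (hXne : X.Nonempty)
    (c : ↥X → ↥X → EReal)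
    (hlsc : LowerSemicontinuous fun q : ↥X × ↥X => c q.1 q.2)
    (hbdd : ∃ K : ℝ, ∀ x y, (K : EReal) ≤ c x y)
    (F₁ F₂ : EntropyFn) (hF₁ : 0 < F₁.recC) (hF₂ : F₂.Superlinear)
    (μ₁ μ₂ : Measure ↥X) (hμ₁ : IsFiniteMeasure μ₁) (hμ₂ : IsFiniteMeasure μ₂) :
    haveI : Nonempty ↥X := hXne.to_subtype
    haveI : PolishSpace ↥X := hXc.isClosed.polishSpace
    (∃ (γ : Measure (↥X × ↥X)) (hγ : IsFiniteMeasure γ), martCond γ hγ ∧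
        ((entF F₁ γ.fst μ₁ : ℝ≥0∞) : EReal) + ((entF F₂ γ.snd μ₂ : ℝ≥0∞) : EReal) +
          eIntegral γ (fun q => c q.1 q.2) < ⊤) →
    eMart c F₁ F₂ μ₁ μ₂
      = sSup { e : EReal | ∃ φ ∈ lamM c F₁ F₂,
          e = eIntegral μ₁ (fun x => F₁.circ (φ.1 x)) +
              eIntegral μ₂ (fun x => F₂.circ (φ.2 x)) } := fun _ =>
  hbdd.elim fun K hK => stmt17_general X hXc hXne c hlsc hK F₁ F₂
    (by simp [show F₂.recC = ⊤ from hF₂]) μ₁ μ₂
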